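/- (Characterization of cyclicity.) Let a > 0 be real and b ∈ ℂ with Re(b) ≥ 0, and let φ(w) = a·w + b, an affine self-map of ℂ₊. Then the composition operator C_φ is cyclic on H²(ℂ₊) — i.e. there exists f ∈ H²(ℂ₊) such that the linear span of the orbit {f ∘ φ^[n] : n ∈ ℕ} is dense in H²(ℂ₊) — if and only if a ≥ 1 and Re(b) > 0. -/

import Mathlib

open Complex MeasureTheory

/-- The square of the `H²(ℂ₊)` norm: `sup_{x>0} ∫ |f(x+iy)|² dy`, valued in `ℝ≥0∞`. -/
noncomputable def H2normSq (f : ℂ → ℂ) : ENNReal :=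
  ⨆ x ∈ Set.Ioi (0 : ℝ), ∫⁻ y : ℝ, (‖f ((x : ℂ) + (y : ℂ) * Complex.I)‖₊ : ENNReal) ^ 2

/-- Membership in the Hardy space `H²(ℂ₊)` of the right half-plane. -/
def MemH2 (f : ℂ → ℂ) : Prop :=
  DifferentiableOn ℂ f {w : ℂ | 0 < w.re} ∧ H2normSq f < ⊤

/-!
By the Paley–Wiener theorem the Laplace transform maps `L²(0, ∞)` onto `H²(ℂ₊)`, and it turns `C_φ`
into the weighted dilation `T F(t) = a⁻¹ e^{-bt/a} F(t/a)`.

If `a ≥ 1` and `Re b > 0`, the orbit of `e^{-bt/a}` consists of multiples of the exponentials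
`e^{-λₙt}` with `λₙ = b (a⁻¹ + ⋯ + a⁻ⁿ⁻¹)`. As `∑ Re λₙ / (1 + |λₙ|²)` diverges, they are total by
the Müntz–Szász theorem, which reflects the divergence of a Blaschke product to zero.

Conversely, if `T` has a cyclic vector, then every continuous bilinear form `D` with
`D (T x) y = D x (T y)` is symmetric. In the remaining cases some such `D` is not symmetric: `T` is
the multiplication by a periodic function if `a = 1` and `Re b = 0`, and a weighted inversion
`t ↦ 1/t` intertwines it with its transpose if `a ≠ 1` and the fixed point `b / (1 - a)` of `φ` has
nonnegative real part.
-/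

open Set Filter Topology Real
open scoped ComplexConjugate FourierTransform ENNReal NNReal SchwartzMap

section Fourier

variable {V E : Type*} [NormedAddCommGroup V] [InnerProductSpace ℝ V] [FiniteDimensional ℝ V]
  [MeasurableSpace V] [BorelSpace V] [NormedAddCommGroup E] [InnerProductSpace ℂ E]
  [CompleteSpace E] {f : V → E}

theorem fourier_toLp_ae_eq (hf : Integrable f) (hf₂ : MemLp f 2) :
    (𝓕 (hf₂.toLp f) : Lp E 2 (volume : Measure V)) =ᵐ[volume] 𝓕 f := by
  have hcont : Continuous (𝓕 f) :=
    VectorFourier.fourierIntegral_continuous Real.continuous_fourierChar continuous_inner hf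
  refine ae_eq_of_integral_contDiff_smul_eq ((Lp.memLp _).locallyIntegrable one_le_two)
    hcont.locallyIntegrable fun g hg hgs ↦ ?_
  have hgs' : HasCompactSupport fun x ↦ (g x : ℂ) := hgs.comp_left (g := ((↑) : ℝ → ℂ)) rfl
  let φ : 𝓢(V, ℂ) := hgs'.toSchwartzMap (Complex.ofRealCLM.contDiff.comp hg)
  have hφ (u : V → E) : (fun x ↦ g x • u x) = fun x ↦ φ x • u x := by
    ext x
    exact (Complex.coe_smul (g x) (u x)).symm
  have hdistrib := congrArg (fun T ↦ T φ) (Lp.fourier_toTemperedDistribution_eq (hf₂.toLp f))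
  simp only [TemperedDistribution.fourier_apply, Lp.toTemperedDistribution_apply] at hdistrib
  have hflip := VectorFourier.integral_fourierIntegral_smul_eq_flip (μ := volume) (ν := volume)
    (L := innerₗ V) Real.continuous_fourierChar continuous_inner φ.integrable hf
  rw [flip_innerₗ] at hflip
  calc ∫ x, g x • (𝓕 (hf₂.toLp f) : Lp E 2 (volume : Measure V)) x
      = ∫ x, (𝓕 φ) x • hf₂.toLp f x := by rw [hφ, hdistrib]
    _ = ∫ x, (𝓕 φ) x • f x := integral_congr_ae <| by
        filter_upwards [hf₂.coeFn_toLp] with x hx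
        rw [hx]
    _ = ∫ x, g x • 𝓕 f x := by rw [hφ]; exact hflip

theorem eLpNorm_fourier_eq (hf : Integrable f) (hf₂ : MemLp f 2) :
    eLpNorm (𝓕 f) 2 = eLpNorm f 2 := by
  rw [← eLpNorm_congr_ae (fourier_toLp_ae_eq hf hf₂), ← Lp.enorm_def, ← ofReal_norm,
    Lp.norm_fourier_eq, ofReal_norm, Lp.enorm_toLp]

end Fourier

theorem lintegral_comp_mul_left (g : ℝ → ℝ≥0∞) {a : ℝ} (ha : a ≠ 0) :
    ∫⁻ t, g (a * t) = ENNReal.ofReal |a⁻¹| * ∫⁻ t, g t := by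
  rw [← smul_eq_mul, ← lintegral_smul_measure, ← Real.map_volume_mul_left ha]
  exact ((Homeomorph.mulLeft₀ a ha).measurableEmbedding.lintegral_map g).symm

theorem eLpNorm_two_sq {α E : Type*} [MeasurableSpace α] [NormedAddCommGroup E] (μ : Measure α)
    (f : α → E) : eLpNorm f 2 μ ^ 2 = ∫⁻ x, ‖f x‖ₑ ^ 2 ∂μ := by
  simpa using eLpNorm_nnreal_pow_eq_lintegral (μ := μ) (f := f) (p := 2) two_ne_zero

section Laplace

/-- Lebesgue measure on the half-line `(0, ∞)`. -/
noncomputable abbrev halfLine : Measure ℝ := volume.restrict (Ioi 0)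

/-- The function `t ↦ e^{-zt} F(t)`. -/
noncomputable def damp (z : ℂ) (F : ℝ → ℂ) (t : ℝ) : ℂ := cexp (-z * t) * F t

/-- The Laplace transform. -/
noncomputable def laplace (F : ℝ → ℂ) (w : ℂ) : ℂ := ∫ t, damp w F t ∂halfLine

/-- The restriction of `f` to the line `Re w = x`, as a function of the frequency `ξ = Im w / 2π`,
so that the lines of a Laplace transform are Fourier transforms in Mathlib's normalization. -/
noncomputable def verticalLine (f : ℂ → ℂ) (x ξ : ℝ) : ℂ := f (x + (2 * π * ξ : ℝ) * I)

theorem damp_damp (z w : ℂ) (F : ℝ → ℂ) : damp z (damp w F) = damp (z + w) F := by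
  ext t
  rw [damp, damp, damp, ← mul_assoc, ← Complex.exp_add, ← add_mul, neg_add]

theorem damp_mul_damp (z w : ℂ) (F G : ℝ → ℂ) : damp z F * damp w G = damp (z + w) (F * G) := by
  ext t
  simp only [damp, Pi.mul_apply, neg_add, add_mul, Complex.exp_add]
  ring

theorem damp_zero (F : ℝ → ℂ) : damp 0 F = F := by
  ext t
  simp [damp]

theorem norm_damp (z : ℂ) (F : ℝ → ℂ) (t : ℝ) :
    ‖damp z F t‖ = rexp (-z.re * t) * ‖F t‖ := by
  simp [damp, Complex.norm_exp]

theorem aestronglyMeasurable_damp {F : ℝ → ℂ} {μ : Measure ℝ} (hF : AEStronglyMeasurable F μ)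
    (z : ℂ) : AEStronglyMeasurable (damp z F) μ :=
  (by fun_prop : Continuous fun t : ℝ ↦ cexp (-z * t)).aestronglyMeasurable.mul hF

theorem aestronglyMeasurable_damp_iff {F : ℝ → ℂ} {μ : Measure ℝ} {z : ℂ} :
    AEStronglyMeasurable (damp z F) μ ↔ AEStronglyMeasurable F μ :=
  ⟨fun h ↦ by simpa [damp_damp, damp_zero] using aestronglyMeasurable_damp h (-z),
    fun h ↦ aestronglyMeasurable_damp h z⟩

theorem eLpNorm_damp_le {z : ℂ} (hz : 0 ≤ z.re) (F : ℝ → ℂ) (p : ℝ≥0∞) :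
    eLpNorm (damp z F) p halfLine ≤ eLpNorm F p halfLine := by
  refine eLpNorm_mono_ae ?_
  filter_upwards [ae_restrict_mem measurableSet_Ioi] with t ht
  rw [norm_damp]
  refine mul_le_of_le_one_left (norm_nonneg _) (Real.exp_le_one_iff.2 ?_)
  rw [neg_mul]
  exact neg_nonpos.2 (mul_nonneg hz (mem_Ioi.1 ht).le)

theorem memLp_damp {F : ℝ → ℂ} {p : ℝ≥0∞} (hF : MemLp F p halfLine) {z : ℂ}
    (hz : 0 ≤ z.re) : MemLp (damp z F) p halfLine :=
  ⟨aestronglyMeasurable_damp hF.1 z, (eLpNorm_damp_le hz F p).trans_lt hF.2⟩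

theorem memLp_damp_of_re_le {F : ℝ → ℂ} {p : ℝ≥0∞} {z w : ℂ} (hF : MemLp (damp z F) p halfLine)
    (hzw : z.re ≤ w.re) : MemLp (damp w F) p halfLine := by
  have := memLp_damp hF (z := w - z) (by simpa using hzw)
  rwa [damp_damp, sub_add_cancel] at this

theorem memLp_damp_one {z : ℂ} (hz : 0 < z.re) : MemLp (damp z 1) 2 halfLine := by
  have hmeas : AEStronglyMeasurable (damp z 1) halfLine :=
    aestronglyMeasurable_damp aestronglyMeasurable_one z
  refine (memLp_two_iff_integrable_sq_norm hmeas).2 ?_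
  refine (integrableOn_exp_mul_Ioi (a := -2 * z.re) (by linarith) 0).congr_fun
    (fun t _ ↦ ?_) measurableSet_Ioi
  simp [norm_damp, ← Real.exp_nat_mul, mul_assoc]

theorem integrable_damp {F : ℝ → ℂ} (hF : ∀ x : ℝ, 0 < x → MemLp (damp x F) 2 halfLine)
    {w : ℂ} (hw : 0 < w.re) : Integrable (damp w F) halfLine := by
  have hw₂ : 0 < w.re / 2 := half_pos hw
  have h₁ : MemLp (damp (w / 2) 1) 2 halfLine := memLp_damp_one (by simpa using hw)
  have h₂ : MemLp (damp (w / 2) F) 2 halfLine := memLp_damp_of_re_le (hF _ hw₂) (by simp)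
  simpa only [damp_mul_damp, add_halves, one_mul] using h₁.integrable_mul h₂

theorem eLpNorm_le_of_forall_eLpNorm_damp_le {F : ℝ → ℂ} {C : ℝ≥0∞}
    (hF : AEStronglyMeasurable F halfLine) (p : ℝ≥0∞)
    (h : ∀ x : ℝ, 0 < x → eLpNorm (damp x F) p halfLine ≤ C) : eLpNorm F p halfLine ≤ C := by
  let x (n : ℕ) : ℝ := 1 / ((n : ℝ) + 1)
  have hx (n : ℕ) : 0 < x n := Nat.one_div_pos_of_nat
  refine (Lp.eLpNorm_lim_le_liminf_eLpNorm (f := fun n ↦ damp (x n) F)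
    (fun n ↦ aestronglyMeasurable_damp hF _) F (.of_forall fun t ↦ ?_)).trans
    (liminf_le_of_frequently_le' (.of_forall fun n ↦ h _ (hx n)))
  have hlim : Tendsto (fun n ↦ cexp (-(x n : ℂ) * t) * F t) atTop (𝓝 (cexp (-(0 : ℝ) * t) * F t)) :=
    Tendsto.mul_const _ <| Continuous.tendsto' (by fun_prop : Continuous fun y : ℝ ↦ cexp (-y * t))
      _ _ rfl |>.comp tendsto_one_div_add_atTop_nhds_zero_nat
  simpa [damp] using hlim

theorem verticalLine_laplace (F : ℝ → ℂ) (x : ℝ) :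
    verticalLine (laplace F) x = 𝓕 ((Ioi 0).indicator (damp x F)) := by
  ext ξ
  rw [verticalLine, laplace, Real.fourier_real_eq_integral_exp_smul,
    ← integral_indicator measurableSet_Ioi]
  congr 1 with t
  by_cases ht : t ∈ Ioi (0 : ℝ)
  · simp only [indicator_of_mem ht, damp, smul_eq_mul, ← mul_assoc, ← Complex.exp_add]
    congr 2
    push_cast
    ring
  · simp [indicator_of_notMem ht]

theorem lintegral_verticalLine (f : ℂ → ℂ) (g : ℂ → ℝ≥0∞) (x : ℝ) :
    ∫⁻ y : ℝ, g (f (x + y * I)) = ENNReal.ofReal (2 * π) * ∫⁻ ξ, g (verticalLine f x ξ) := by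
  have h := lintegral_comp_mul_left (fun y : ℝ ↦ g (f (x + y * I))) Real.two_pi_pos.ne'
  rw [abs_of_pos (by positivity)] at h
  simp only [verticalLine]
  rw [h, ← mul_assoc, ← ENNReal.ofReal_mul (by positivity), mul_inv_cancel₀ (by positivity),
    ENNReal.ofReal_one, one_mul]

theorem H2normSq_eq_iSup (f : ℂ → ℂ) :
    H2normSq f = ⨆ x ∈ Ioi (0 : ℝ), ENNReal.ofReal (2 * π) * eLpNorm (verticalLine f x) 2 ^ 2 := by
  simp only [H2normSq, eLpNorm_two_sq, ← lintegral_verticalLine f (‖·‖ₑ ^ 2)]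
  rfl

theorem H2normSq_congr {f g : ℂ → ℂ} (h : EqOn f g {w | 0 < w.re}) : H2normSq f = H2normSq g :=
  biSup_congr fun x hx ↦ lintegral_congr fun y ↦ by rw [h (by simpa using hx)]

variable {F : ℝ → ℂ} (hF : ∀ x : ℝ, 0 < x → MemLp (damp x F) 2 halfLine)

include hF

theorem memLp_indicator_damp {x : ℝ} (hx : 0 < x) : MemLp ((Ioi 0).indicator (damp x F)) 2 :=
  (memLp_indicator_iff_restrict measurableSet_Ioi).2 (hF x hx)

theorem integrable_indicator_damp {x : ℝ} (hx : 0 < x) :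
    Integrable ((Ioi 0).indicator (damp x F)) :=
  (integrable_indicator_iff measurableSet_Ioi).2 (integrable_damp hF (by simpa using hx))

theorem eLpNorm_verticalLine_laplace {x : ℝ} (hx : 0 < x) :
    eLpNorm (verticalLine (laplace F) x) 2 = eLpNorm (damp x F) 2 halfLine := by
  rw [verticalLine_laplace, eLpNorm_fourier_eq (integrable_indicator_damp hF hx)
    (memLp_indicator_damp hF hx), eLpNorm_indicator_eq_eLpNorm_restrict measurableSet_Ioi]

theorem H2normSq_laplace :
    H2normSq (laplace F) = ENNReal.ofReal (2 * π) * eLpNorm F 2 halfLine ^ 2 := by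
  have hmeas : AEStronglyMeasurable F halfLine :=
    aestronglyMeasurable_damp_iff.1 (hF 1 one_pos).1
  rw [H2normSq_eq_iSup]
  refine le_antisymm (iSup₂_le fun x hx ↦ ?_) ?_
  · rw [eLpNorm_verticalLine_laplace hF hx]
    gcongr
    exact eLpNorm_damp_le (by simpa using (mem_Ioi.1 hx).le) F 2
  · simp_rw [← ENNReal.mul_iSup]
    gcongr
    rw [← ENNReal.rpow_two, ← ENNReal.le_rpow_inv_iff two_pos]
    refine eLpNorm_le_of_forall_eLpNorm_damp_le hmeas 2 fun x hx ↦ ?_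
    rw [ENNReal.le_rpow_inv_iff two_pos, ENNReal.rpow_two, ← eLpNorm_verticalLine_laplace hF hx]
    exact le_iSup₂_of_le x hx le_rfl

theorem memLp_of_H2normSq_laplace_lt_top (h : H2normSq (laplace F) < ⊤) : MemLp F 2 halfLine := by
  refine ⟨aestronglyMeasurable_damp_iff.1 (hF 1 one_pos).1, lt_top_iff_ne_top.2 fun htop ↦ ?_⟩
  rw [H2normSq_laplace hF, htop] at h
  simp [ENNReal.mul_top, pi_pos] at h

end Laplace

section PaleyWiener

theorem integral_line_eq_of_integrable_strip {q : ℂ → ℂ} {x X : ℝ} (hxX : x ≤ X)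
    (hq : DifferentiableOn ℂ q {z | z.re ∈ Icc x X})
    (hstrip : Integrable (fun p : ℝ × ℝ ↦ q (p.1 + p.2 * I))
      ((volume.restrict (Ioc x X)).prod volume))
    (hx : Integrable fun y : ℝ ↦ q (x + y * I)) (hX : Integrable fun y : ℝ ↦ q (X + y * I)) :
    ∫ y : ℝ, q (x + y * I) = ∫ y : ℝ, q (X + y * I) := by
  have hrect (T : ℝ) : (∫ u in x..X, q (u + (-T : ℝ) * I)) - (∫ u in x..X, q (u + T * I)) =
      I • (∫ y in (-T)..T, q (x + y * I)) - I • ∫ y in (-T)..T, q (X + y * I) := by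
    have h := Complex.integral_boundary_rect_eq_zero_of_differentiableOn q ⟨x, -T⟩ ⟨X, T⟩
      (hq.mono fun z hz ↦ by simpa [uIcc_of_le hxX] using (mem_reProdIm.1 hz).1)
    dsimp only at h
    linear_combination h
  have hcross : Integrable fun T : ℝ ↦ ∫ u in x..X, q (u + T * I) := by
    simpa only [intervalIntegral.integral_of_le hxX] using hstrip.integral_prod_right
  have hlim : Tendsto
      (fun T : ℝ ↦ (∫ u in x..X, q (u + (-T : ℝ) * I)) - (∫ u in x..X, q (u + T * I))) atTop
      (𝓝 (I • (∫ y : ℝ, q (x + y * I)) - I • ∫ y : ℝ, q (X + y * I))) := by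
    simp only [hrect]
    exact .sub (.const_smul (intervalIntegral_tendsto_integral hx tendsto_neg_atTop_atBot
      tendsto_id) I) (.const_smul (intervalIntegral_tendsto_integral hX tendsto_neg_atTop_atBot
      tendsto_id) I)
  have hzero := IntegrableAtFilter.eq_zero_of_tendsto (μ := volume)
    ((hcross.comp_neg.sub hcross).integrableAtFilter atTop)
    (fun s hs ↦ by
      obtain ⟨T, hT⟩ := mem_atTop_sets.1 hs
      exact measure_mono_top hT Real.volume_Ici) hlim
  rwa [← smul_sub, smul_eq_zero, or_iff_right I_ne_zero, sub_eq_zero] at hzero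

theorem ae_eq_zero_of_integral_Iic_eq_zero {E : Type*} [NormedAddCommGroup E] [NormedSpace ℝ E]
    [CompleteSpace E] {g : ℝ → E} {U : Set ℝ} (hU : IsOpen U) (hg : ∀ s, IntegrableOn g (Iic s))
    (h : ∀ s ∈ U, ∫ t in Iic s, g t = 0) : ∀ᵐ t, t ∈ U → g t = 0 := by
  have hloc : LocallyIntegrable g := locallyIntegrable_iff.2 fun K hK ↦ by
    obtain ⟨s, hs⟩ := hK.bddAbove
    exact (hg s).mono_set hs
  filter_upwards [LocallyIntegrable.ae_hasDerivAt_integral hloc] with t ht htU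
  have hconst : (fun s ↦ ∫ u in (0 : ℝ)..s, g u) =ᶠ[𝓝 t] fun _ ↦ -∫ u in Iic 0, g u := by
    filter_upwards [hU.mem_nhds htU] with s hs
    rw [← intervalIntegral.integral_Iic_sub_Iic (hg 0) (hg s), h s hs, zero_sub]
  exact (ht 0).unique ((hasDerivAt_const t _).congr_of_eventuallyEq hconst)

/-- The exponential `t ↦ e^{xt}` cut off at `s`. -/
noncomputable def truncExp (x s : ℝ) : ℝ → ℂ := (Iic s).indicator (damp (-x) 1)

theorem norm_truncExp (x s t : ℝ) :
    ‖truncExp x s t‖ = (Iic s).indicator (fun t ↦ rexp (x * t)) t := by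
  by_cases ht : t ∈ Iic s <;> simp [truncExp, ht, norm_damp]

theorem integrable_truncExp {x : ℝ} (hx : 0 < x) (s : ℝ) : Integrable (truncExp x s) := by
  rw [truncExp, integrable_indicator_iff measurableSet_Iic]
  exact (integrableOn_exp_mul_complex_Iic (a := x) (by simpa using hx) s).congr_fun
    (fun t _ ↦ by simp [damp]) measurableSet_Iic

theorem memLp_truncExp {x : ℝ} (hx : 0 < x) (s : ℝ) : MemLp (truncExp x s) 2 := by
  rw [memLp_two_iff_integrable_sq_norm (integrable_truncExp hx s).1]
  refine (integrable_truncExp (mul_pos two_pos hx) s).norm.congr (.of_forall fun t ↦ ?_)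
  by_cases ht : t ∈ Iic s <;> simp [norm_truncExp, ht, ← Real.exp_nat_mul, mul_assoc]

theorem eLpNorm_truncExp_le {u x : ℝ} (hux : u ≤ x) (s : ℝ) (p : ℝ≥0∞) :
    eLpNorm (truncExp x s) p ≤ ENNReal.ofReal (rexp ((x - u) * s)) * eLpNorm (truncExp u s) p := by
  refine eLpNorm_le_mul_eLpNorm_of_ae_le_mul (.of_forall fun t ↦ ?_) p
  by_cases ht : t ∈ Iic s
  · rw [norm_truncExp, norm_truncExp, indicator_of_mem ht, indicator_of_mem ht, ← Real.exp_add]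
    gcongr
    nlinarith [mem_Iic.1 ht]
  · simp [norm_truncExp, ht]

theorem fourier_truncExp {x : ℝ} (hx : 0 < x) (s : ℝ) :
    𝓕 (truncExp x s) = fun ξ ↦ conj (verticalLine (fun z ↦ cexp (z * s) / z) x ξ) := by
  ext ξ
  rw [Real.fourier_real_eq_integral_exp_smul]
  have h : ∀ t, cexp (↑(-2 * π * t * ξ) * I) • truncExp x s t =
      (Iic s).indicator (fun t : ℝ ↦ cexp ((x - (2 * π * ξ : ℝ) * I) * t)) t := by
    intro t
    by_cases ht : t ∈ Iic s
    · simp only [truncExp, ht, indicator_of_mem, damp, smul_eq_mul, Pi.one_apply, mul_one,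
        ← Complex.exp_add]
      congr 1
      push_cast
      ring
    · simp [truncExp, ht]
  simp only [h]
  rw [integral_indicator measurableSet_Iic, integral_exp_mul_complex_Iic (by simpa using hx)]
  simp [verticalLine, ← Complex.exp_conj, sub_eq_add_neg, map_ofNat]

theorem integral_verticalLine_mul_kernel {f : ℂ → ℂ} {x : ℝ} (hx : 0 < x) (s : ℝ)
    (hf : MemLp (verticalLine f x) 2) :
    ∫ ξ, verticalLine (fun z ↦ f z * (cexp (z * s) / z)) x ξ =
      ∫ t in Iic s, damp (-x) (𝓕⁻ (hf.toLp _) : Lp ℂ 2 (volume : Measure ℝ)) t := by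
  set k := (memLp_truncExp hx s).toLp
  set h : Lp ℂ 2 (volume : Measure ℝ) := 𝓕⁻ (hf.toLp _)
  have h𝓕 : 𝓕 h = hf.toLp _ := FourierTransform.fourier_fourierInv_eq _
  calc ∫ ξ, verticalLine (fun z ↦ f z * (cexp (z * s) / z)) x ξ
      = inner ℂ (𝓕 k) (𝓕 h) := by
        rw [L2.inner_def, h𝓕]
        refine integral_congr_ae ?_
        filter_upwards [hf.coeFn_toLp,
          fourier_toLp_ae_eq (integrable_truncExp hx s) (memLp_truncExp hx s)] with ξ hfξ hkξ
        rw [hfξ, hkξ, fourier_truncExp hx]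
        simp [verticalLine]
    _ = inner ℂ k h := Lp.inner_fourier_eq k h
    _ = ∫ t, (Iic s).indicator (damp (-x) h) t := by
        rw [L2.inner_def]
        refine integral_congr_ae ?_
        filter_upwards [(memLp_truncExp hx s).coeFn_toLp] with t ht
        rw [ht]
        by_cases hts : t ∈ Iic s
        · simp [truncExp, hts, damp, ← Complex.exp_conj, mul_comm]
        · simp [truncExp, hts]
    _ = ∫ t in Iic s, damp (-x) h t := integral_indicator measurableSet_Iic

theorem integrableOn_damp_Iic {h : ℝ → ℂ} (hh : MemLp h 2) {x : ℝ} (hx : 0 < x) (s : ℝ) :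
    IntegrableOn (damp (-x) h) (Iic s) := by
  rw [← integrable_indicator_iff measurableSet_Iic]
  refine ((memLp_truncExp hx s).integrable_mul hh).congr (.of_forall fun t ↦ ?_)
  by_cases hts : t ∈ Iic s <;> simp [truncExp, hts, damp]

theorem continuous_verticalLine {f : ℂ → ℂ} (hf : ContinuousOn f {w | 0 < w.re}) {x : ℝ}
    (hx : 0 < x) : Continuous (verticalLine f x) :=
  hf.comp_continuous (by fun_prop) fun ξ ↦ by simpa using hx

theorem MemH2.exists_eLpNorm_verticalLine_le {f : ℂ → ℂ} (hf : MemH2 f) :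
    ∃ C : ℝ≥0, ∀ x : ℝ, 0 < x → eLpNorm (verticalLine f x) 2 ≤ C := by
  have hpi : ENNReal.ofReal (2 * π) ≠ 0 := by simp [pi_pos]
  have hC : (H2normSq f / ENNReal.ofReal (2 * π)) ^ (2⁻¹ : ℝ) ≠ ⊤ :=
    ENNReal.rpow_ne_top_of_nonneg (by positivity) (ENNReal.div_ne_top hf.2.ne hpi)
  refine ⟨_, fun x hx ↦ (?_ : _ ≤ _).trans_eq (ENNReal.coe_toNNReal hC).symm⟩
  rw [ENNReal.le_rpow_inv_iff two_pos, ENNReal.rpow_two,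
    ENNReal.le_div_iff_mul_le (.inl hpi) (.inl ENNReal.ofReal_ne_top), mul_comm, H2normSq_eq_iSup]
  exact le_iSup₂_of_le x hx le_rfl

theorem MemH2.memLp_verticalLine {f : ℂ → ℂ} (hf : MemH2 f) {x : ℝ} (hx : 0 < x) :
    MemLp (verticalLine f x) 2 := by
  obtain ⟨C, hC⟩ := hf.exists_eLpNorm_verticalLine_le
  exact ⟨(continuous_verticalLine hf.1.continuousOn hx).aestronglyMeasurable,
    (hC x hx).trans_lt ENNReal.coe_lt_top⟩

theorem eLpNorm_verticalLine_kernel {x : ℝ} (hx : 0 < x) (s : ℝ) :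
    eLpNorm (verticalLine (fun z ↦ cexp (z * s) / z) x) 2 = eLpNorm (truncExp x s) 2 := by
  rw [← eLpNorm_fourier_eq (integrable_truncExp hx s) (memLp_truncExp hx s), fourier_truncExp hx]
  exact eLpNorm_congr_norm_ae (.of_forall fun ξ ↦ (Complex.norm_conj _).symm)

theorem lintegral_verticalLine_mul_kernel_le {f : ℂ → ℂ} {x : ℝ} (hx : 0 < x) (s : ℝ)
    (hf : AEStronglyMeasurable (verticalLine f x)) :
    ∫⁻ ξ, ‖verticalLine (fun z ↦ f z * (cexp (z * s) / z)) x ξ‖ₑ ≤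
      eLpNorm (verticalLine f x) 2 volume * eLpNorm (truncExp x s) 2 volume := by
  have hk : ContinuousOn (fun z : ℂ ↦ cexp (z * s) / z) {w | 0 < w.re} :=
    ContinuousOn.div (by fun_prop) continuousOn_id fun z hz h ↦ by simp [h] at hz
  have hle := eLpNorm_smul_le_mul_eLpNorm (p := 2) (q := 2) (r := 1)
    (continuous_verticalLine hk hx).aestronglyMeasurable hf
  rw [eLpNorm_one_eq_lintegral_enorm] at hle
  rw [← eLpNorm_verticalLine_kernel hx]
  exact hle

theorem integrable_strip_of_lintegral_line_le {q : ℂ → ℂ} {x X : ℝ} {K : ℝ≥0}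
    (hq : ContinuousOn q {z | z.re ∈ Ioc x X})
    (hK : ∀ u ∈ Ioc x X, ∫⁻ y : ℝ, ‖q (u + y * I)‖ₑ ≤ K) :
    Integrable (fun p : ℝ × ℝ ↦ q (p.1 + p.2 * I)) ((volume.restrict (Ioc x X)).prod volume) := by
  have hmeas : AEStronglyMeasurable (fun p : ℝ × ℝ ↦ q (p.1 + p.2 * I))
      ((volume.restrict (Ioc x X)).prod volume) := by
    have hcont : ContinuousOn (fun p : ℝ × ℝ ↦ q (p.1 + p.2 * I)) (Ioc x X ×ˢ univ) :=
      hq.comp (by fun_prop) fun p hp ↦ by simpa using hp.1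
    simpa [← Measure.prod_restrict] using hcont.aestronglyMeasurable (μ := volume.prod volume)
      (measurableSet_Ioc.prod MeasurableSet.univ)
  refine ⟨hmeas, ?_⟩
  calc ∫⁻ p : ℝ × ℝ, ‖q (p.1 + p.2 * I)‖ₑ ∂(volume.restrict (Ioc x X)).prod volume
      = ∫⁻ u in Ioc x X, ∫⁻ y : ℝ, ‖q (u + y * I)‖ₑ := lintegral_prod _ hmeas.enorm
    _ ≤ ∫⁻ _ in Ioc x X, K := setLIntegral_mono' measurableSet_Ioc hK
    _ < ⊤ := by simp [ENNReal.mul_lt_top]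

theorem integral_verticalLine (q : ℂ → ℂ) (x : ℝ) :
    ∫ ξ, verticalLine q x ξ = (2 * π : ℝ)⁻¹ • ∫ y : ℝ, q (x + y * I) := by
  simp only [verticalLine]
  rw [Measure.integral_comp_mul_left (fun y : ℝ ↦ q (x + y * I)), abs_of_pos (by positivity)]

theorem integrable_verticalLine_iff {q : ℂ → ℂ} {x : ℝ} :
    Integrable (verticalLine q x) ↔ Integrable fun y : ℝ ↦ q (x + y * I) :=
  integrable_comp_mul_left_iff (fun y : ℝ ↦ q (x + y * I)) Real.two_pi_pos.ne'

variable {f : ℂ → ℂ} (hf : MemH2 f)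

include hf

theorem MemH2.differentiableOn_mul_kernel (s : ℝ) :
    DifferentiableOn ℂ (fun z ↦ f z * (cexp (z * s) / z)) {w | 0 < w.re} :=
  hf.1.mul <| DifferentiableOn.div (by fun_prop) differentiableOn_id fun z hz h ↦ by
    simp [h] at hz

theorem MemH2.exists_lintegral_mul_kernel_le {x : ℝ} (hx : 0 < x) (s : ℝ) :
    ∃ K : ℝ≥0, ∀ u, x ≤ u → ∫⁻ ξ, ‖verticalLine (fun z ↦ f z * (cexp (z * s) / z)) u ξ‖ₑ ≤
      ENNReal.ofReal (rexp ((u - x) * s)) * K := by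
  obtain ⟨C, hC⟩ := hf.exists_eLpNorm_verticalLine_le
  lift eLpNorm (truncExp x s) 2 volume to ℝ≥0 using (memLp_truncExp hx s).2.ne with D hD
  refine ⟨C * D, fun u hu ↦ ?_⟩
  have hu₀ := hx.trans_le hu
  calc ∫⁻ ξ, ‖verticalLine (fun z ↦ f z * (cexp (z * s) / z)) u ξ‖ₑ
      ≤ eLpNorm (verticalLine f u) 2 volume * eLpNorm (truncExp u s) 2 volume :=
        lintegral_verticalLine_mul_kernel_le hu₀ s (hf.memLp_verticalLine hu₀).1
    _ ≤ C * (ENNReal.ofReal (rexp ((u - x) * s)) * D) := by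
        rw [hD]
        exact mul_le_mul' (hC u hu₀) (eLpNorm_truncExp_le hu s 2)
    _ = _ := by push_cast; ring

theorem MemH2.integrable_verticalLine_mul_kernel {x : ℝ} (hx : 0 < x) (s : ℝ) :
    Integrable (verticalLine (fun z ↦ f z * (cexp (z * s) / z)) x) := by
  obtain ⟨K, hK⟩ := hf.exists_lintegral_mul_kernel_le hx s
  exact ⟨(continuous_verticalLine (hf.differentiableOn_mul_kernel s).continuousOn
    hx).aestronglyMeasurable, (hK x le_rfl).trans_lt (by finiteness)⟩

theorem MemH2.integral_verticalLine_mul_kernel_eq {x X : ℝ} (hx : 0 < x) (hxX : x ≤ X) (s : ℝ) :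
    ∫ ξ, verticalLine (fun z ↦ f z * (cexp (z * s) / z)) x ξ =
      ∫ ξ, verticalLine (fun z ↦ f z * (cexp (z * s) / z)) X ξ := by
  obtain ⟨K, hK⟩ := hf.exists_lintegral_mul_kernel_le hx s
  have hq := hf.differentiableOn_mul_kernel s
  have hbound : ∀ u ∈ Ioc x X, ∫⁻ y : ℝ, ‖f (u + y * I) * (cexp ((u + y * I) * s) / (u + y * I))‖ₑ ≤
      (Real.toNNReal (2 * π) * (Real.toNNReal (rexp ((X - x) * |s|)) * K) : ℝ≥0) := by
    intro u hu
    rw [lintegral_verticalLine (fun z ↦ f z * (cexp (z * s) / z)) (‖·‖ₑ)]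
    push_cast
    refine mul_le_mul_right ((hK u hu.1.le).trans (mul_le_mul_left ?_ _)) _
    refine ENNReal.ofReal_le_ofReal (Real.exp_le_exp.2 ?_)
    exact (mul_le_mul_of_nonneg_left (le_abs_self s) (sub_nonneg.2 hu.1.le)).trans
      (mul_le_mul_of_nonneg_right (by linarith [hu.2]) (abs_nonneg s))
  rw [integral_verticalLine, integral_verticalLine, integral_line_eq_of_integrable_strip hxX
    (hq.mono fun z hz ↦ hx.trans_le hz.1)
    (integrable_strip_of_lintegral_line_le (hq.continuousOn.mono fun z hz ↦ hx.trans hz.1) hbound)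
    (integrable_verticalLine_iff.1 (hf.integrable_verticalLine_mul_kernel hx s))
    (integrable_verticalLine_iff.1 (hf.integrable_verticalLine_mul_kernel (hx.trans_le hxX) s))]

theorem MemH2.integral_verticalLine_mul_kernel_eq_zero {x s : ℝ} (hx : 0 < x) (hs : s < 0) :
    ∫ ξ, verticalLine (fun z ↦ f z * (cexp (z * s) / z)) x ξ = 0 := by
  obtain ⟨K, hK⟩ := hf.exists_lintegral_mul_kernel_le hx s
  have hlim : Tendsto (fun n : ℕ ↦ ENNReal.ofReal (rexp (n * s)) * K) atTop (𝓝 0) := by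
    have hexp : Tendsto (fun n : ℕ ↦ rexp (n * s)) atTop (𝓝 0) :=
      Real.tendsto_exp_atBot.comp (tendsto_natCast_atTop_atTop.atTop_mul_const_of_neg hs)
    simpa using ENNReal.Tendsto.mul_const (ENNReal.tendsto_ofReal hexp) (.inr ENNReal.coe_ne_top)
  refine enorm_eq_zero.1 (le_antisymm (ge_of_tendsto' hlim fun n ↦ ?_) zero_le)
  have hn : x ≤ x + n := le_add_of_nonneg_right n.cast_nonneg
  rw [hf.integral_verticalLine_mul_kernel_eq hx hn]
  simpa using (enorm_integral_le_lintegral_enorm _).trans (hK _ hn)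

/-- The inverse Fourier transform of the restriction of `f ∈ H²(ℂ₊)` to the line `Re w = x`; by
Paley–Wiener it is `t ↦ e^{-xt} F(t)` on `(0, ∞)` for a function `F` not depending on `x`. -/
noncomputable def MemH2.lineSpectrum {x : ℝ} (hx : 0 < x) : Lp ℂ 2 (volume : Measure ℝ) :=
  𝓕⁻ ((hf.memLp_verticalLine hx).toLp _)

theorem MemH2.integral_damp_lineSpectrum {x : ℝ} (hx : 0 < x) (s : ℝ) :
    ∫ t in Iic s, damp (-x) (hf.lineSpectrum hx) t =
      ∫ ξ, verticalLine (fun z ↦ f z * (cexp (z * s) / z)) x ξ :=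
  (integral_verticalLine_mul_kernel hx s _).symm

theorem MemH2.integrableOn_damp_lineSpectrum {x : ℝ} (hx : 0 < x) (s : ℝ) :
    IntegrableOn (damp (-x) (hf.lineSpectrum hx)) (Iic s) :=
  integrableOn_damp_Iic (Lp.memLp _) hx s

theorem MemH2.damp_lineSpectrum_ae_eq {x X : ℝ} (hx : 0 < x) (hX : 0 < X) :
    damp (-x) (hf.lineSpectrum hx) =ᵐ[volume] damp (-X) (hf.lineSpectrum hX) := by
  wlog hxX : x ≤ X
  · exact (this hf hX hx (le_of_not_ge hxX)).symm
  have hint := hf.integrableOn_damp_lineSpectrum hx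
  have hInt := hf.integrableOn_damp_lineSpectrum hX
  have hzero := ae_eq_zero_of_integral_Iic_eq_zero isOpen_univ
    (fun s ↦ (hint s).sub (hInt s)) fun s _ ↦ by
      rw [integral_sub' (hint s) (hInt s), integral_damp_lineSpectrum, integral_damp_lineSpectrum,
        hf.integral_verticalLine_mul_kernel_eq hx hxX, sub_self]
  filter_upwards [hzero] with t ht
  exact sub_eq_zero.1 (ht (mem_univ t))

theorem MemH2.lineSpectrum_ae_eq_zero {x : ℝ} (hx : 0 < x) :
    ∀ᵐ t, t < 0 → hf.lineSpectrum hx t = 0 := by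
  have hzero := ae_eq_zero_of_integral_Iic_eq_zero isOpen_Iio
    (hf.integrableOn_damp_lineSpectrum hx) fun s hs ↦ by
      rw [integral_damp_lineSpectrum, hf.integral_verticalLine_mul_kernel_eq_zero hx hs]
  filter_upwards [hzero] with t ht ht₀
  simpa [damp] using ht ht₀

theorem MemH2.exists_lineSpectrum_ae_eq : ∃ F : ℝ → ℂ, ∀ x (hx : 0 < x),
    hf.lineSpectrum hx =ᵐ[volume] (Ioi 0).indicator (damp x F) := by
  refine ⟨damp (-(1 : ℝ)) (hf.lineSpectrum one_pos), fun x hx ↦ ?_⟩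
  filter_upwards [hf.damp_lineSpectrum_ae_eq hx one_pos, hf.lineSpectrum_ae_eq_zero hx,
    Measure.ae_ne volume 0] with t ht hneg ht₀
  rcases ht₀.lt_or_gt with h | h
  · rw [hneg h, indicator_of_notMem (by simpa using h.le)]
  · rw [indicator_of_mem (mem_Ioi.2 h), damp, ← ht, ← damp, damp_damp, add_neg_cancel, damp_zero]

theorem MemH2.exists_verticalLine_ae_eq_laplace : ∃ F : ℝ → ℂ,
    (∀ x : ℝ, 0 < x → MemLp (damp x F) 2 halfLine) ∧
    ∀ x : ℝ, 0 < x → verticalLine f x =ᵐ[volume] verticalLine (laplace F) x := by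
  obtain ⟨F, hF⟩ := hf.exists_lineSpectrum_ae_eq
  have hmem (x : ℝ) (hx : 0 < x) : MemLp (damp x F) 2 halfLine :=
    (memLp_indicator_iff_restrict measurableSet_Ioi).1 ((memLp_congr_ae (hF x hx)).1 (Lp.memLp _))
  refine ⟨F, hmem, fun x hx ↦ ?_⟩
  have htoLp : (memLp_indicator_damp hmem hx).toLp _ = hf.lineSpectrum hx :=
    Lp.ext ((MemLp.coeFn_toLp _).trans (hF x hx).symm)
  have hfourier := fourier_toLp_ae_eq (integrable_indicator_damp hmem hx)
    (memLp_indicator_damp hmem hx)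
  rw [htoLp, lineSpectrum, FourierTransform.fourier_fourierInv_eq] at hfourier
  rw [verticalLine_laplace]
  exact (MemLp.coeFn_toLp _).symm.trans hfourier

theorem MemH2.exists_eqOn_laplace :
    ∃ F : ℝ → ℂ, MemLp F 2 halfLine ∧ EqOn f (laplace F) {w | 0 < w.re} := by
  obtain ⟨F, hF, hfF⟩ := hf.exists_verticalLine_ae_eq_laplace
  have heq : EqOn f (laplace F) {w | 0 < w.re} := by
    intro w hw
    have hcont : Continuous (verticalLine (laplace F) w.re) := by
      rw [verticalLine_laplace]
      exact VectorFourier.fourierIntegral_continuous Real.continuous_fourierChar continuous_inner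
        (integrable_indicator_damp hF hw)
    have h := congrFun (((continuous_verticalLine hf.1.continuousOn hw).ae_eq_iff_eq _ hcont).1
      (hfF w.re hw)) (w.im / (2 * π))
    rwa [verticalLine, verticalLine, mul_div_cancel₀ _ Real.two_pi_pos.ne', re_add_im] at h
  exact ⟨F, memLp_of_H2normSq_laplace_lt_top hF (H2normSq_congr heq ▸ hf.2), heq⟩

end PaleyWiener

section Holomorphy

theorem norm_mul_damp_le {c : ℝ} (hc : 0 < c) {z : ℂ} (hz : 2 * c ≤ z.re) {t : ℝ} (ht : 0 < t)
    (F : ℝ → ℂ) : ‖-(t : ℂ) * damp z F t‖ ≤ c⁻¹ * ‖damp c F t‖ := by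
  have hexp : t * rexp (-z.re * t) ≤ c⁻¹ * rexp (-c * t) :=
    calc t * rexp (-z.re * t) ≤ t * rexp (-(c * t) + -c * t) := by gcongr; nlinarith
      _ = c⁻¹ * (c * t * rexp (-(c * t))) * rexp (-c * t) := by
        rw [Real.exp_add, mul_assoc c, inv_mul_cancel_left₀ hc.ne', mul_assoc]
      _ ≤ c⁻¹ * 1 * rexp (-c * t) := by
        gcongr
        exact (Real.mul_exp_neg_le_exp_neg_one _).trans (Real.exp_le_one_iff.2 (by norm_num))
      _ = c⁻¹ * rexp (-c * t) := by rw [mul_one]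
  calc ‖-(t : ℂ) * damp z F t‖ = t * rexp (-z.re * t) * ‖F t‖ := by
        rw [norm_mul, norm_neg, norm_real, Real.norm_of_nonneg ht.le, norm_damp, mul_assoc]
    _ ≤ c⁻¹ * rexp (-c * t) * ‖F t‖ := by gcongr
    _ = c⁻¹ * ‖damp c F t‖ := by rw [norm_damp, ofReal_re, mul_assoc]

theorem differentiableOn_laplace {F : ℝ → ℂ}
    (hF : ∀ x : ℝ, 0 < x → MemLp (damp x F) 2 halfLine) :
    DifferentiableOn ℂ (laplace F) {w | 0 < w.re} := by
  intro w (hw : 0 < w.re)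
  have hc : 0 < w.re / 4 := by positivity
  have hmeas : AEStronglyMeasurable F halfLine := aestronglyMeasurable_damp_iff.1 (hF 1 one_pos).1
  have hs : {z : ℂ | 2 * (w.re / 4) < z.re} ∈ 𝓝 w :=
    (isOpen_lt continuous_const continuous_re).mem_nhds (by simp only [mem_ofPred_eq]; linarith)
  have hderiv := hasDerivAt_integral_of_dominated_loc_of_deriv_le (𝕜 := ℂ) (μ := halfLine)
    (F := fun z ↦ damp z F) (F' := fun z t ↦ -(t : ℂ) * damp z F t)
    (bound := fun t ↦ (w.re / 4)⁻¹ * ‖damp (w.re / 4 : ℝ) F t‖) hs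
    (.of_forall fun z ↦ aestronglyMeasurable_damp hmeas z) (integrable_damp hF hw)
    ((by fun_prop : Continuous fun t : ℝ ↦ -(t : ℂ)).aestronglyMeasurable.mul
      (aestronglyMeasurable_damp hmeas w))
    ((ae_restrict_mem measurableSet_Ioi).mono fun t ht z hz ↦
      norm_mul_damp_le hc (le_of_lt hz) ht F)
    ((integrable_damp hF (by simpa using hw)).norm.const_mul _)
    (.of_forall fun t z _ ↦ by
      simpa [damp, mul_comm, mul_assoc, mul_left_comm] using
        (((hasDerivAt_id z).neg.mul_const (t : ℂ)).cexp).mul_const (F t))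
  exact hderiv.2.differentiableAt.differentiableWithinAt

theorem memH2_laplace {F : ℝ → ℂ} (hF : MemLp F 2 halfLine) : MemH2 (laplace F) := by
  have hdamp (x : ℝ) (hx : 0 < x) : MemLp (damp x F) 2 halfLine :=
    memLp_damp hF (by simpa using hx.le)
  refine ⟨differentiableOn_laplace hdamp, ?_⟩
  rw [H2normSq_laplace hdamp]
  exact ENNReal.mul_lt_top ENNReal.ofReal_lt_top (ENNReal.pow_lt_top hF.eLpNorm_lt_top)

end Holomorphy

section WeightedComposition

variable {α 𝕜 : Type*} [MeasurableSpace α] [RCLike 𝕜] {μ : Measure α}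
  {u : α → 𝕜} {ψ : α → α} {C : ℝ≥0}

theorem eLpNorm_mul_comp_le
    (hC : ∀ g : α → ℝ≥0∞, ∫⁻ x, ‖u x‖ₑ ^ 2 * g (ψ x) ∂μ ≤ C * ∫⁻ x, g x ∂μ) (f : α → 𝕜) :
    eLpNorm (fun x ↦ u x * f (ψ x)) 2 μ ≤ NNReal.sqrt C * eLpNorm f 2 μ := by
  rw [← ENNReal.pow_le_pow_left_iff two_ne_zero, mul_pow, ← ENNReal.coe_pow, NNReal.sq_sqrt,
    eLpNorm_two_sq, eLpNorm_two_sq]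
  simpa only [enorm_mul, mul_pow] using hC fun x ↦ ‖f x‖ₑ ^ 2

theorem memLp_mul_comp (hu : AEStronglyMeasurable u μ) (hψ : Measure.QuasiMeasurePreserving ψ μ μ)
    (hC : ∀ g : α → ℝ≥0∞, ∫⁻ x, ‖u x‖ₑ ^ 2 * g (ψ x) ∂μ ≤ C * ∫⁻ x, g x ∂μ) {f : α → 𝕜}
    (hf : MemLp f 2 μ) : MemLp (fun x ↦ u x * f (ψ x)) 2 μ :=
  ⟨hu.mul (hf.1.comp_quasiMeasurePreserving hψ),
    (eLpNorm_mul_comp_le hC f).trans_lt (ENNReal.mul_lt_top ENNReal.coe_lt_top hf.2)⟩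

/-- The weighted composition operator `f ↦ u · (f ∘ ψ)` on `L²(μ)`, bounded as soon as the weighted
pull-back of nonnegative functions is. -/
noncomputable def weightedComp (hu : AEStronglyMeasurable u μ)
    (hψ : Measure.QuasiMeasurePreserving ψ μ μ)
    (hC : ∀ g : α → ℝ≥0∞, ∫⁻ x, ‖u x‖ₑ ^ 2 * g (ψ x) ∂μ ≤ C * ∫⁻ x, g x ∂μ) :
    Lp 𝕜 2 μ →L[𝕜] Lp 𝕜 2 μ :=
  LinearMap.mkContinuous
    { toFun f := (memLp_mul_comp hu hψ hC (Lp.memLp f)).toLp _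
      map_add' f g := by
        rw [← MemLp.toLp_add, MemLp.toLp_eq_toLp_iff]
        filter_upwards [hψ.ae (Lp.coeFn_add f g)] with x hx
        simp only [hx, Pi.add_apply, mul_add]
      map_smul' c f := by
        rw [RingHom.id_apply, ← MemLp.toLp_const_smul, MemLp.toLp_eq_toLp_iff]
        filter_upwards [hψ.ae (Lp.coeFn_smul c f)] with x hx
        simp [hx, mul_left_comm] }
    (NNReal.sqrt C) fun f ↦ by
      rw [LinearMap.coe_mk, AddHom.coe_mk, Lp.norm_toLp, Lp.norm_def, ← ENNReal.coe_toReal,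
        ← ENNReal.toReal_mul]
      exact ENNReal.toReal_mono (ENNReal.mul_ne_top ENNReal.coe_ne_top (Lp.eLpNorm_ne_top f))
        (eLpNorm_mul_comp_le hC f)

theorem coeFn_weightedComp (hu : AEStronglyMeasurable u μ)
    (hψ : Measure.QuasiMeasurePreserving ψ μ μ)
    (hC : ∀ g : α → ℝ≥0∞, ∫⁻ x, ‖u x‖ₑ ^ 2 * g (ψ x) ∂μ ≤ C * ∫⁻ x, g x ∂μ) (f : Lp 𝕜 2 μ) :
    weightedComp hu hψ hC f =ᵐ[μ] fun x ↦ u x * f (ψ x) :=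
  MemLp.coeFn_toLp (memLp_mul_comp hu hψ hC (Lp.memLp f))

end WeightedComposition

section AffineOperator

theorem quasiMeasurePreserving_mul_left_halfLine {c : ℝ} (hc : 0 < c) :
    Measure.QuasiMeasurePreserving (c * ·) halfLine halfLine :=
  Measure.QuasiMeasurePreserving.restrict ⟨measurable_const_mul c, by
    rw [Real.map_volume_mul_left hc.ne']
    exact Measure.smul_absolutelyContinuous⟩ fun _ ht ↦ mul_pos hc ht

theorem lintegral_halfLine_comp_mul_left (g : ℝ → ℝ≥0∞) {c : ℝ} (hc : 0 < c) :
    ∫⁻ t, g (c * t) ∂halfLine = ENNReal.ofReal c⁻¹ * ∫⁻ t, g t ∂halfLine := by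
  rw [← lintegral_indicator measurableSet_Ioi, ← lintegral_indicator measurableSet_Ioi,
    ← abs_of_pos (inv_pos.2 hc), ← lintegral_comp_mul_left _ hc.ne']
  congr 1 with t
  simp [indicator, mul_pos_iff_of_pos_left hc]

theorem laplace_congr_ae {F G : ℝ → ℂ} (h : F =ᵐ[halfLine] G) : laplace F = laplace G := by
  ext w
  exact integral_congr_ae (h.mono fun t ht ↦ by simp only [damp, ht])

variable {a : ℝ} {b : ℂ}

theorem lintegral_affineWeight_le (ha : 0 < a) (hb : 0 ≤ b.re) (g : ℝ → ℝ≥0∞) :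
    ∫⁻ t, ‖damp (a⁻¹ * b) (fun _ ↦ (a⁻¹ : ℂ)) t‖ₑ ^ 2 * g (a⁻¹ * t) ∂halfLine ≤
      (‖a⁻¹‖₊ ^ 2 * ‖a‖₊ : ℝ≥0) * ∫⁻ t, g t ∂halfLine := by
  have hdamp : ∀ᵐ t ∂halfLine, ‖damp (a⁻¹ * b) (fun _ ↦ (a⁻¹ : ℂ)) t‖ₑ ≤ ‖a⁻¹‖ₑ := by
    filter_upwards [ae_restrict_mem measurableSet_Ioi] with t (ht : 0 < t)
    refine enorm_le_iff_norm_le.2 ?_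
    rw [norm_damp, ← ofReal_inv, norm_real, re_ofReal_mul]
    refine mul_le_of_le_one_left (norm_nonneg _) (Real.exp_le_one_iff.2 ?_)
    rw [neg_mul, neg_nonpos]
    positivity
  calc _ ≤ ∫⁻ t, ‖a⁻¹‖ₑ ^ 2 * g (a⁻¹ * t) ∂halfLine :=
        lintegral_mono_ae (hdamp.mono fun t ht ↦ by gcongr)
    _ = ‖a⁻¹‖ₑ ^ 2 * (‖a‖ₑ * ∫⁻ t, g t ∂halfLine) := by
        rw [lintegral_const_mul' _ _ (by simp), lintegral_halfLine_comp_mul_left _ (inv_pos.2 ha),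
          inv_inv, ← Real.enorm_of_nonneg ha.le]
    _ = _ := by push_cast; rw [← mul_assoc]; rfl

/-- The operator `F ↦ (t ↦ a⁻¹ e^{-bt/a} F(t/a))` on `L²(0, ∞)`, to which the Laplace transform
conjugates the composition operator of `w ↦ a w + b`. -/
noncomputable def affineOp (ha : 0 < a) (hb : 0 ≤ b.re) : Lp ℂ 2 halfLine →L[ℂ] Lp ℂ 2 halfLine :=
  weightedComp (aestronglyMeasurable_damp aestronglyMeasurable_const (a⁻¹ * b))
    (quasiMeasurePreserving_mul_left_halfLine (inv_pos.2 ha)) (lintegral_affineWeight_le ha hb)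

theorem coeFn_affineOp (ha : 0 < a) (hb : 0 ≤ b.re) (F : Lp ℂ 2 halfLine) :
    affineOp ha hb F =ᵐ[halfLine] fun t ↦ a⁻¹ * damp b F (a⁻¹ * t) := by
  refine (coeFn_weightedComp _ _ _ F).trans (.of_forall fun t ↦ ?_)
  simp only [damp]
  push_cast
  ring_nf

theorem laplace_affineOp (ha : 0 < a) (hb : 0 ≤ b.re) (F : Lp ℂ 2 halfLine) (w : ℂ) :
    laplace (affineOp ha hb F) w = laplace F (a * w + b) := by
  have hscale (t : ℝ) : damp w (fun t ↦ a⁻¹ * damp b F (a⁻¹ * t)) t =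
      a⁻¹ * damp (a * w + b) F (a⁻¹ * t) := by
    rw [← damp_damp]
    simp only [damp]
    push_cast
    rw [show -(a * w) * ((a : ℂ)⁻¹ * t) = -w * t by
      rw [neg_mul, mul_mul_mul_comm, mul_inv_cancel₀ (by exact_mod_cast ha.ne')]; ring]
    ring
  rw [laplace_congr_ae (coeFn_affineOp ha hb F), laplace, integral_congr_ae (.of_forall hscale),
    integral_const_mul, integral_comp_mul_left_Ioi (damp (a * w + b) F) 0 (inv_pos.2 ha), mul_zero,
    inv_inv, real_smul, ← mul_assoc, ← ofReal_mul, inv_mul_cancel₀ ha.ne', ofReal_one, one_mul]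
  rfl

end AffineOperator

/-- A vector whose orbit under the operator `T` spans a dense subspace. -/
def IsCyclicVector {𝕜 E : Type*} [NormedField 𝕜] [SeminormedAddCommGroup E] [NormedSpace 𝕜 E]
    (T : E →L[𝕜] E) (x : E) : Prop :=
  Dense (Submodule.span 𝕜 (range fun n : ℕ ↦ (T ^ n) x) : Set E)

section Transfer

theorem memLp_damp_ofReal (F : Lp ℂ 2 halfLine) (x : ℝ) (hx : 0 < x) :
    MemLp (damp x F) 2 halfLine :=
  memLp_damp (Lp.memLp F) (by simpa using hx.le)

/-- The Laplace transform of `L²(0, ∞)`, as a linear map into the functions on `ℂ₊`. -/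
noncomputable def laplaceₗ : Lp ℂ 2 halfLine →ₗ[ℂ] ({w : ℂ // 0 < w.re} → ℂ) where
  toFun F w := laplace F w
  map_add' F G := by
    ext w
    rw [Pi.add_apply, laplace_congr_ae (Lp.coeFn_add F G)]
    simp only [laplace, damp, Pi.add_apply, mul_add]
    exact integral_add (integrable_damp (memLp_damp_ofReal F) w.2)
      (integrable_damp (memLp_damp_ofReal G) w.2)
  map_smul' c F := by
    ext w
    rw [Pi.smul_apply, laplace_congr_ae (Lp.coeFn_smul c F)]
    simp only [laplace, damp, Pi.smul_apply, mul_smul_comm, integral_smul, RingHom.id_apply]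

theorem H2normSq_laplace_eq_norm (F : Lp ℂ 2 halfLine) :
    H2normSq (laplace F) = ENNReal.ofReal (√(2 * π) * ‖F‖) ^ 2 := by
  rw [H2normSq_laplace (memLp_damp_ofReal F), ENNReal.ofReal_mul (Real.sqrt_nonneg _), mul_pow,
    ← ENNReal.ofReal_pow (Real.sqrt_nonneg _), Real.sq_sqrt (by positivity), ofReal_norm,
    Lp.enorm_def]

theorem H2normSq_laplace_sub (F G : Lp ℂ 2 halfLine) :
    H2normSq (laplace F - laplace G) = ENNReal.ofReal (√(2 * π) * dist F G) ^ 2 := by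
  have heq : EqOn (laplace F - laplace G) (laplace (F - G : Lp ℂ 2 halfLine)) {w | 0 < w.re} :=
    fun w hw ↦ (congrFun (map_sub laplaceₗ F G) ⟨w, hw⟩).symm
  rw [H2normSq_congr heq, H2normSq_laplace_eq_norm, dist_eq_norm]

theorem norm_le_of_norm_laplace_le {F G : Lp ℂ 2 halfLine} {c : ℝ} (hc : 0 ≤ c)
    (h : ∀ w : ℂ, 0 < w.re → ‖laplace F w‖ ≤ c * ‖laplace G w‖) : ‖F‖ ≤ c * ‖G‖ := by
  have hH : H2normSq (laplace F) ≤ ENNReal.ofReal c ^ 2 * H2normSq (laplace G) := by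
    simp only [H2normSq, ENNReal.mul_iSup]
    refine iSup₂_mono fun x hx ↦ ?_
    rw [← lintegral_const_mul' _ _ (by finiteness)]
    refine lintegral_mono fun y ↦ ?_
    rw [← mul_pow]
    gcongr
    rw [← enorm_eq_nnnorm, ← enorm_eq_nnnorm, ← ofReal_norm, ← ofReal_norm, ← ENNReal.ofReal_mul hc]
    exact ENNReal.ofReal_le_ofReal (h _ (by simpa using hx))
  rw [H2normSq_laplace_eq_norm, H2normSq_laplace_eq_norm, ← mul_pow, ← ENNReal.ofReal_mul hc,
    ENNReal.pow_le_pow_left_iff two_ne_zero, ENNReal.ofReal_le_ofReal_iff (by positivity),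
    mul_left_comm] at hH
  exact le_of_mul_le_mul_left hH (by positivity)

variable {a : ℝ} {b : ℂ} {φ : ℂ → ℂ} {f : ℂ → ℂ}

theorem comp_iterate_eqOn_laplace_affineOp_pow (ha : 0 < a) (hb : 0 ≤ b.re)
    (hφ : ∀ w, φ w = a * w + b) {F : Lp ℂ 2 halfLine}
    (hf : EqOn f (laplace F) {w | 0 < w.re}) (n : ℕ) :
    EqOn (f ∘ φ^[n]) (laplace ((affineOp ha hb ^ n) F)) {w | 0 < w.re} := by
  induction n with
  | zero => simpa using hf
  | succ n ih =>
    intro w (hw : 0 < w.re)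
    have hφw : 0 < (φ w).re := by
      rw [hφ, add_re, re_ofReal_mul]
      positivity
    rw [Function.iterate_succ, ← Function.comp_assoc, Function.comp_apply, ih hφw, hφ, pow_succ',
      mul_apply_eq_comp, laplace_affineOp]

theorem map_restrict_span_orbit (ha : 0 < a) (hb : 0 ≤ b.re)
    (hφ : ∀ w, φ w = a * w + b) {F : Lp ℂ 2 halfLine}
    (hf : EqOn f (laplace F) {w | 0 < w.re}) :
    (Submodule.span ℂ (range fun n : ℕ ↦ f ∘ φ^[n])).map
        (LinearMap.funLeft ℂ ℂ (Subtype.val : {w : ℂ // 0 < w.re} → ℂ)) =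
      (Submodule.span ℂ (range fun n : ℕ ↦ (affineOp ha hb ^ n) F)).map laplaceₗ := by
  rw [Submodule.map_span, Submodule.map_span, ← range_comp, ← range_comp]
  congr 2
  ext n w
  exact comp_iterate_eqOn_laplace_affineOp_pow ha hb hφ hf n w.2

theorem dense_span_orbit_iff (ha : 0 < a) (hb : 0 ≤ b.re)
    (hφ : ∀ w, φ w = a * w + b) {F : Lp ℂ 2 halfLine}
    (hf : EqOn f (laplace F) {w | 0 < w.re}) :
    (∀ g : ℂ → ℂ, MemH2 g → ∀ ε : ℝ, 0 < ε →
      ∃ h ∈ Submodule.span ℂ (range fun n : ℕ ↦ f ∘ φ^[n]),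
        H2normSq (g - h) < ENNReal.ofReal ε ^ 2) ↔ IsCyclicVector (affineOp ha hb) F := by
  have hmap := map_restrict_span_orbit ha hb hφ hf
  constructor
  · refine fun H G ↦ Metric.mem_closure_iff.2 fun ε hε ↦ ?_
    obtain ⟨h, hmem, hlt⟩ := H (laplace G) (memH2_laplace (Lp.memLp G)) (√(2 * π) * ε)
      (by positivity)
    obtain ⟨K, hK, hKh⟩ := hmap.le (Submodule.mem_map_of_mem hmem)
    have heq : EqOn (laplace G - h) (laplace G - laplace K) {w | 0 < w.re} := fun w hw ↦
      congrArg (laplace G w - ·) (congrFun hKh ⟨w, hw⟩).symm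
    rw [H2normSq_congr heq, H2normSq_laplace_sub, ENNReal.pow_lt_pow_left_iff two_ne_zero,
      ENNReal.ofReal_lt_ofReal_iff (by positivity)] at hlt
    exact ⟨K, hK, lt_of_mul_lt_mul_left hlt (by positivity)⟩
  · intro H g hg ε hε
    obtain ⟨G₀, hG₀, hgG₀⟩ := hg.exists_eqOn_laplace
    obtain ⟨K, hK, hlt⟩ := Metric.mem_closure_iff.1 (H (hG₀.toLp G₀)) (ε / √(2 * π)) (by positivity)
    obtain ⟨h, hmem, hhK⟩ := hmap.ge (Submodule.mem_map_of_mem hK)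
    have heq : EqOn (g - h) (laplace (hG₀.toLp G₀) - laplace K) {w | 0 < w.re} := fun w hw ↦ by
      rw [Pi.sub_apply, Pi.sub_apply, hgG₀ hw, laplace_congr_ae hG₀.coeFn_toLp]
      exact congrArg (laplace G₀ w - ·) (congrFun hhK ⟨w, hw⟩)
    refine ⟨h, hmem, ?_⟩
    rw [H2normSq_congr heq, H2normSq_laplace_sub, ENNReal.pow_lt_pow_left_iff two_ne_zero,
      ENNReal.ofReal_lt_ofReal_iff hε]
    rwa [lt_div_iff₀' (by positivity)] at hlt

theorem exists_cyclic_iff_exists_isCyclicVector (ha : 0 < a) (hb : 0 ≤ b.re)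
    (hφ : ∀ w, φ w = a * w + b) :
    (∃ f : ℂ → ℂ, MemH2 f ∧ ∀ g : ℂ → ℂ, MemH2 g → ∀ ε : ℝ, 0 < ε →
      ∃ h ∈ Submodule.span ℂ (range fun n : ℕ ↦ f ∘ φ^[n]),
        H2normSq (g - h) < ENNReal.ofReal ε ^ 2) ↔ ∃ F, IsCyclicVector (affineOp ha hb) F := by
  constructor
  · rintro ⟨f, hf, hcyc⟩
    obtain ⟨F, hF, hfF⟩ := hf.exists_eqOn_laplace
    rw [← laplace_congr_ae hF.coeFn_toLp] at hfF
    exact ⟨hF.toLp F, (dense_span_orbit_iff ha hb hφ hfF).1 hcyc⟩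
  · rintro ⟨F, hF⟩
    exact ⟨laplace F, memH2_laplace (Lp.memLp F),
      (dense_span_orbit_iff ha hb hφ fun _ _ ↦ rfl).2 hF⟩

end Transfer

section MuntzSzasz

/-- The exponential `t ↦ e^{-zt}`, as an element of `L²(0, ∞)`. -/
noncomputable def expLp {z : ℂ} (hz : 0 < z.re) : Lp ℂ 2 halfLine := (memLp_damp_one hz).toLp

theorem coeFn_expLp {z : ℂ} (hz : 0 < z.re) : expLp hz =ᵐ[halfLine] damp z 1 :=
  (memLp_damp_one hz).coeFn_toLp

theorem laplace_expLp {z w : ℂ} (hz : 0 < z.re) (hw : 0 < w.re) :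
    laplace (expLp hz) w = (w + z)⁻¹ := by
  rw [laplace_congr_ae (coeFn_expLp hz), laplace, damp_damp]
  simp only [damp, Pi.one_apply, mul_one]
  rw [integral_exp_mul_complex_Ioi (by simp only [neg_re, add_re]; linarith) 0]
  simp [-neg_add_rev]

theorem inner_expLp {z : ℂ} (hz : 0 < z.re) (F : Lp ℂ 2 halfLine) :
    inner ℂ (expLp hz) F = laplace F (conj z) := by
  rw [L2.inner_def]
  refine integral_congr_ae ((coeFn_expLp hz).mono fun t ht ↦ ?_)
  simp [ht, damp, ← Complex.exp_conj, mul_comm]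

theorem topologicalClosure_span_expLp :
    (Submodule.span ℂ (range fun z : {z : ℂ // 0 < z.re} ↦ expLp z.2)).topologicalClosure = ⊤ := by
  refine Submodule.topologicalClosure_eq_top_iff.2 ((Submodule.eq_bot_iff _).2 fun F hF ↦ ?_)
  have hlap (w : ℂ) (hw : 0 < w.re) : laplace F w = 0 := by
    have hw' : 0 < (conj w).re := by rwa [conj_re]
    rw [← conj_conj w, ← inner_expLp hw']
    exact (Submodule.mem_orthogonal _ _).1 hF _ (Submodule.subset_span ⟨⟨_, hw'⟩, rfl⟩)
  have hle := norm_le_of_norm_laplace_le (F := F) (G := F) le_rfl fun w hw ↦ by simp [hlap w hw]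
  simpa using hle

/-- The Blaschke factor of `ℂ₊` with zero `conj l`, up to the constant that normalizes its product
with `(w + μ)⁻¹` to have residue `1` at `-μ`. -/
noncomputable def blaschke (μ l w : ℂ) : ℂ :=
  (μ - l) / (μ + conj l) * ((w - conj l) / (w + l))

variable {μ l w : ℂ}

theorem add_ne_zero_of_re_pos {z w : ℂ} (hz : 0 < z.re) (hw : 0 < w.re) : z + w ≠ 0 := fun h ↦
  (add_pos hz hw).ne' (by rw [← add_re, h, zero_re])

theorem norm_sub_conj_sq (z w : ℂ) : ‖z - conj w‖ ^ 2 = ‖z + w‖ ^ 2 - 4 * z.re * w.re := by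
  simp only [← normSq_eq_norm_sq, normSq_apply, sub_re, sub_im, add_re, add_im, conj_re, conj_im]
  ring

theorem norm_blaschke_le (μ : ℂ) (hl : 0 < l.re) (hw : 0 < w.re) :
    ‖blaschke μ l w‖ ≤ ‖(μ - l) / (μ + conj l)‖ := by
  rw [blaschke, norm_mul, norm_div (w - conj l)]
  refine mul_le_of_le_one_right (norm_nonneg _) (div_le_one_of_le₀ ?_ (norm_nonneg _))
  refine le_of_sq_le_sq ?_ (norm_nonneg _)
  rw [norm_sub_conj_sq]
  nlinarith [mul_pos hl hw]

theorem blaschke_mul_inv {ν : ℂ} (hl : 0 < l.re) (hν : 0 < ν.re) (hw : 0 < w.re) (hne : ν ≠ l) :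
    blaschke μ l w * (w + ν)⁻¹ =
      (μ - l) / (μ + conj l) * ((ν + conj l) / (ν - l) * (w + ν)⁻¹ -
        (l + conj l) / (ν - l) * (w + l)⁻¹) := by
  have hwl := add_ne_zero_of_re_pos hw hl
  have hwν := add_ne_zero_of_re_pos hw hν
  have hνl := sub_ne_zero.2 hne
  rw [blaschke, mul_assoc]
  congr 1
  field_simp
  ring

theorem blaschke_mul_inv_self (hl : 0 < l.re) (hμ : 0 < μ.re) (hw : 0 < w.re) (hne : μ ≠ l) :
    blaschke μ l w * (w + μ)⁻¹ =
      (w + μ)⁻¹ - (l + conj l) / (μ + conj l) * (w + l)⁻¹ := by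
  have hμl : μ + conj l ≠ 0 := add_ne_zero_of_re_pos hμ (by rwa [conj_re])
  rw [blaschke_mul_inv hl hμ hw hne]
  have := sub_ne_zero.2 hne
  field_simp

variable {ι : Type*} {lam : ι → ℂ} (hlam : ∀ i, 0 < (lam i).re)

/-- The span of the exponentials `t ↦ e^{-λᵢt}` with `i ∈ s`. -/
noncomputable def expSpan (s : Set ι) : Submodule ℂ (Lp ℂ 2 halfLine) :=
  Submodule.span ℂ ((fun i ↦ expLp (hlam i)) '' s)

theorem expLp_mem_expSpan {s : Set ι} {i : ι} (hi : i ∈ s) : expLp (hlam i) ∈ expSpan hlam s :=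
  Submodule.subset_span (mem_image_of_mem _ hi)

theorem laplaceₗ_expLp {z : ℂ} (hz : 0 < z.re) (w : {w : ℂ // 0 < w.re}) :
    laplaceₗ (expLp hz) w = (w + z)⁻¹ :=
  laplace_expLp hz w.2

theorem map_mulLeft_blaschke_le (hinj : Function.Injective lam) (μ : ℂ) {s : Set ι} {i : ι}
    (hi : i ∉ s) :
    ((expSpan hlam s).map laplaceₗ).map
        (LinearMap.mulLeft ℂ fun w : {w : ℂ // 0 < w.re} ↦ blaschke μ (lam i) w) ≤
      (expSpan hlam (insert i s)).map laplaceₗ := by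
  rw [expSpan, Submodule.map_span, Submodule.map_span, Submodule.span_le]
  rintro _ ⟨_, ⟨_, ⟨j, hj, rfl⟩, rfl⟩, rfl⟩
  have hji : lam j ≠ lam i := hinj.ne (ne_of_mem_of_not_mem hj hi)
  refine ⟨((μ - lam i) / (μ + conj (lam i))) •
    (((lam j + conj (lam i)) / (lam j - lam i)) • expLp (hlam j) -
      ((lam i + conj (lam i)) / (lam j - lam i)) • expLp (hlam i)), ?_, ?_⟩
  · exact Submodule.smul_mem _ _ (Submodule.sub_mem _
      (Submodule.smul_mem _ _ (expLp_mem_expSpan hlam (mem_insert_of_mem i hj)))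
      (Submodule.smul_mem _ _ (expLp_mem_expSpan hlam (mem_insert i s))))
  · ext w
    simp [laplaceₗ_expLp, blaschke_mul_inv (hlam i) (hlam j) w.2 hji]

theorem exists_laplace_eq_prod_blaschke (hinj : Function.Injective lam) (hμ : 0 < μ.re)
    (s : Finset ι) (hs : ∀ i ∈ s, μ ≠ lam i) :
    ∃ G ∈ expSpan hlam s, ∀ w : {w : ℂ // 0 < w.re},
      laplaceₗ (expLp hμ + G) w = (∏ i ∈ s, blaschke μ (lam i) w) * (w + μ)⁻¹ := by
  induction s using Finset.cons_induction with
  | empty => exact ⟨0, Submodule.zero_mem _, fun w ↦ by simp [laplaceₗ_expLp]⟩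
  | cons i s hi ih =>
    obtain ⟨G, hG, hlap⟩ := ih fun j hj ↦ hs j (Finset.mem_cons_of_mem hj)
    obtain ⟨G', hG', hlap'⟩ := map_mulLeft_blaschke_le hlam hinj μ (Finset.mem_coe.not.2 hi)
      (Submodule.mem_map_of_mem (Submodule.mem_map_of_mem hG))
    rw [Finset.coe_cons]
    refine ⟨G' - ((lam i + conj (lam i)) / (μ + conj (lam i))) • expLp (hlam i),
      Submodule.sub_mem _ hG'
        (Submodule.smul_mem _ _ (expLp_mem_expSpan hlam (mem_insert i s))), fun w ↦ ?_⟩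
    have hw := hlap w
    have hw' := congrFun hlap' w
    rw [map_add, Pi.add_apply, laplaceₗ_expLp] at hw
    rw [LinearMap.mulLeft_apply, Pi.mul_apply] at hw'
    rw [Finset.prod_cons, mul_assoc, ← hw, mul_add, ← hw',
      blaschke_mul_inv_self (hlam i) hμ w.2 (hs i (Finset.mem_cons_self i s))]
    simp only [map_add, map_sub, map_smul, Pi.add_apply, Pi.sub_apply, Pi.smul_apply,
      laplaceₗ_expLp, smul_eq_mul]
    ring

theorem exists_norm_expLp_add_le (hinj : Function.Injective lam) (hμ : 0 < μ.re)
    (s : Finset ι) (hs : ∀ i ∈ s, μ ≠ lam i) :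
    ∃ G ∈ expSpan hlam s,
      ‖expLp hμ + G‖ ≤ (∏ i ∈ s, ‖(μ - lam i) / (μ + conj (lam i))‖) * ‖expLp hμ‖ := by
  obtain ⟨G, hG, hlap⟩ := exists_laplace_eq_prod_blaschke hlam hinj hμ s hs
  refine ⟨G, hG, norm_le_of_norm_laplace_le (by positivity) fun w hw ↦ ?_⟩
  rw [laplace_expLp hμ hw, show laplace (expLp hμ + G : Lp ℂ 2 halfLine) w = _ from hlap ⟨w, hw⟩,
    norm_mul, norm_prod]
  gcongr with i
  exact norm_blaschke_le μ (hlam i) hw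

theorem norm_sub_div_add_conj_le_exp (hl : 0 < l.re) (hμ : 0 < μ.re) :
    ‖(μ - l) / (μ + conj l)‖ ≤
      rexp (-(μ.re / (1 + ‖μ‖ ^ 2) * (l.re / (1 + ‖l‖ ^ 2)))) := by
  have hμl : 0 < ‖μ + conj l‖ :=
    norm_pos_iff.2 (add_ne_zero_of_re_pos hμ (by rwa [conj_re]))
  have hsub : ‖μ - l‖ ^ 2 = ‖μ + conj l‖ ^ 2 - 4 * μ.re * l.re := by
    simpa using norm_sub_conj_sq μ (conj l)
  have hadd : ‖μ + conj l‖ ^ 2 ≤ 2 * ((1 + ‖μ‖ ^ 2) * (1 + ‖l‖ ^ 2)) := by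
    have h : ‖μ + conj l‖ ≤ ‖μ‖ + ‖l‖ := by simpa using norm_add_le μ (conj l)
    nlinarith [sq_nonneg (‖μ‖ - ‖l‖), mul_nonneg (sq_nonneg ‖μ‖) (sq_nonneg ‖l‖),
      norm_nonneg (μ + conj l)]
  have hdefect : 2 * (μ.re / (1 + ‖μ‖ ^ 2) * (l.re / (1 + ‖l‖ ^ 2))) ≤
      4 * μ.re * l.re / ‖μ + conj l‖ ^ 2 :=
    calc _ = 4 * μ.re * l.re / (2 * ((1 + ‖μ‖ ^ 2) * (1 + ‖l‖ ^ 2))) := by field_simp; norm_num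
      _ ≤ _ := by gcongr
  rw [← pow_le_pow_iff_left₀ (norm_nonneg _) (Real.exp_nonneg _) two_ne_zero, ← Real.exp_nat_mul,
    norm_div, div_pow, hsub, sub_div, div_self (by positivity)]
  refine le_trans ?_ (Real.add_one_le_exp _)
  push_cast
  linarith

/-- The **Müntz–Szász theorem**, with powers `x ^ λᵢ` turned into exponentials by `x = e^{-t}`. -/
theorem dense_expSpan_univ (hinj : Function.Injective lam)
    (hsum : ¬ Summable fun i ↦ (lam i).re / (1 + ‖lam i‖ ^ 2)) :
    Dense (expSpan hlam univ : Set (Lp ℂ 2 halfLine)) := by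
  suffices h : ∀ (μ : ℂ) (hμ : 0 < μ.re), expLp hμ ∈ (expSpan hlam univ).topologicalClosure by
    rw [Submodule.dense_iff_topologicalClosure_eq_top, ← top_le_iff,
      ← topologicalClosure_span_expLp]
    refine Submodule.topologicalClosure_minimal _ (Submodule.span_le.2 ?_)
      (Submodule.isClosed_topologicalClosure _)
    rintro _ ⟨z, rfl⟩
    exact h z z.2
  intro μ hμ
  by_cases hμlam : ∃ i, μ = lam i
  · obtain ⟨i, rfl⟩ := hμlam
    exact Submodule.le_topologicalClosure _ (expLp_mem_expSpan hlam (mem_univ i))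
  push Not at hμlam
  refine Metric.mem_closure_iff.2 fun ε hε ↦ ?_
  set c := μ.re / (1 + ‖μ‖ ^ 2)
  have hc : 0 < c := by positivity
  obtain ⟨M, hM⟩ : ∃ M, rexp (-M) * ‖expLp hμ‖ < ε := by
    have := (Real.tendsto_exp_neg_atTop_nhds_zero.mul_const ‖expLp hμ‖)
    rw [zero_mul] at this
    exact (this.eventually_lt_const hε).exists
  obtain ⟨s, hs⟩ : ∃ s : Finset ι, M / c < ∑ i ∈ s, (lam i).re / (1 + ‖lam i‖ ^ 2) := by
    by_contra! h
    exact hsum (summable_of_sum_le (fun i ↦ div_nonneg (hlam i).le (by positivity)) h)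
  obtain ⟨G, hG, hle⟩ := exists_norm_expLp_add_le hlam hinj hμ s fun i _ ↦ hμlam i
  refine ⟨-G, Submodule.neg_mem _ (Submodule.span_mono (image_mono (subset_univ _)) hG), ?_⟩
  calc dist (expLp hμ) (-G) = ‖expLp hμ + G‖ := by rw [dist_eq_norm, sub_neg_eq_add]
    _ ≤ (∏ i ∈ s, ‖(μ - lam i) / (μ + conj (lam i))‖) * ‖expLp hμ‖ := hle
    _ ≤ (∏ i ∈ s, rexp (-(c * ((lam i).re / (1 + ‖lam i‖ ^ 2))))) * ‖expLp hμ‖ := by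
      gcongr with i
      exact norm_sub_div_add_conj_le_exp (hlam i) hμ
    _ = rexp (-(c * ∑ i ∈ s, (lam i).re / (1 + ‖lam i‖ ^ 2))) * ‖expLp hμ‖ := by
      rw [← Real.exp_sum, Finset.sum_neg_distrib, Finset.mul_sum]
    _ ≤ rexp (-M) * ‖expLp hμ‖ := by
      gcongr
      exact ((div_lt_iff₀' hc).1 hs).le
    _ < ε := hM

end MuntzSzasz

section Sufficiency

variable {a : ℝ} {b : ℂ}

/-- `∑_{k = 1}^{n + 1} r ^ k`: for `r = a⁻¹`, the `n`-th power of `affineOp` maps the exponential of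
exponent `b / a` to a multiple of the one of exponent `powSum r n * b`. -/
noncomputable def powSum (r : ℝ) (n : ℕ) : ℝ := ∑ k ∈ Finset.range (n + 1), r ^ (k + 1)

theorem powSum_succ (r : ℝ) (n : ℕ) : powSum r (n + 1) = r * (powSum r n + 1) := by
  rw [powSum, Finset.sum_range_succ', powSum, mul_add, Finset.mul_sum]
  simp [pow_succ']

theorem strictMono_powSum {r : ℝ} (hr : 0 < r) : StrictMono (powSum r) :=
  strictMono_nat_of_lt_succ fun n ↦ by
    rw [powSum, powSum, Finset.sum_range_succ _ (n + 1)]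
    exact lt_add_of_pos_right _ (by positivity)

theorem le_powSum {r : ℝ} (hr : 0 < r) (n : ℕ) : r ≤ powSum r n := by
  simpa [powSum] using (strictMono_powSum hr).monotone n.zero_le

theorem powSum_le {r : ℝ} (hr : 0 < r) (hr₁ : r ≤ 1) (n : ℕ) : powSum r n ≤ n + 1 := by
  refine (Finset.sum_le_card_nsmul _ _ 1 fun k _ ↦ pow_le_one₀ hr.le hr₁).trans ?_
  simp

theorem not_summable_re_div_one_add_sq_powSum {r : ℝ} (hr : 0 < r) (hr₁ : r ≤ 1) (hb : 0 < b.re) :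
    ¬ Summable fun n ↦ (powSum r n * b).re / (1 + ‖powSum r n * b‖ ^ 2) := by
  intro h
  set c := b.re / ((r ^ 2)⁻¹ + ‖b‖ ^ 2)
  have hc : 0 < c := by positivity
  have hle (n : ℕ) : c * (1 / ((n + 1 : ℕ) : ℝ)) ≤
      (powSum r n * b).re / (1 + ‖powSum r n * b‖ ^ 2) := by
    have hσ := le_powSum hr n
    have hσ₀ : 0 < powSum r n := hr.trans_le hσ
    have hone : 1 ≤ powSum r n ^ 2 * (r ^ 2)⁻¹ := by
      rw [← div_eq_mul_inv, one_le_div (by positivity)]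
      gcongr
    calc c * (1 / ((n + 1 : ℕ) : ℝ)) ≤ c * (1 / powSum r n) := by
          push_cast
          gcongr
          exact powSum_le hr hr₁ n
      _ = powSum r n * b.re / (powSum r n ^ 2 * ((r ^ 2)⁻¹ + ‖b‖ ^ 2)) := by
          simp only [c]
          field_simp
      _ ≤ powSum r n * b.re / (1 + powSum r n ^ 2 * ‖b‖ ^ 2) := by
          gcongr
          linarith
      _ = _ := by rw [re_ofReal_mul, norm_mul, norm_real, mul_pow, norm_eq_abs, sq_abs]
  have hharm := (summable_mul_left_iff hc.ne').1 (h.of_nonneg_of_le (fun n ↦ by positivity) hle)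
  exact Real.not_summable_one_div_natCast ((summable_nat_add_iff 1).1 hharm)

theorem affineOp_expLp (ha : 0 < a) (hb : 0 ≤ b.re) {z z' : ℂ} (hz : 0 < z.re) (hz' : 0 < z'.re)
    (h : z' = a⁻¹ * (z + b)) : affineOp ha hb (expLp hz) = (a⁻¹ : ℂ) • expLp hz' := by
  refine Lp.ext ?_
  filter_upwards [coeFn_affineOp ha hb (expLp hz), Lp.coeFn_smul (a⁻¹ : ℂ) (expLp hz'),
    coeFn_expLp hz', (quasiMeasurePreserving_mul_left_halfLine (inv_pos.2 ha)).ae (coeFn_expLp hz)]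
    with t hT hsmul ht' ht
  rw [hT, hsmul, Pi.smul_apply, ht', smul_eq_mul, damp, ht]
  simp only [damp, Pi.one_apply, mul_one, ← Complex.exp_add, h]
  push_cast
  ring_nf

theorem exists_isCyclicVector (ha : 1 ≤ a) (hb : 0 < b.re) :
    ∃ F, IsCyclicVector (affineOp (one_pos.trans_le ha) hb.le) F := by
  have ha₀ : 0 < a := one_pos.trans_le ha
  have hr : 0 < a⁻¹ := inv_pos.2 ha₀
  have hlam (n : ℕ) : 0 < (powSum a⁻¹ n * b : ℂ).re := by
    rw [re_ofReal_mul]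
    exact mul_pos (hr.trans_le (le_powSum hr n)) hb
  have hb₀ : b ≠ 0 := by rintro rfl; exact hb.ne' rfl
  have hinj : Function.Injective fun n ↦ (powSum a⁻¹ n * b : ℂ) := fun m n hmn ↦
    (strictMono_powSum hr).injective (ofReal_injective (mul_right_cancel₀ hb₀ hmn))
  have horbit (n : ℕ) : (affineOp ha₀ hb.le ^ n) (expLp (hlam 0)) =
      (a⁻¹ : ℂ) ^ n • expLp (hlam n) := by
    induction n with
    | zero => simp
    | succ n ih =>
      rw [pow_succ', mul_apply_eq_comp, ih, map_smul, affineOp_expLp ha₀ hb.le _ (hlam (n + 1)) ?_,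
        smul_smul, pow_succ]
      rw [powSum_succ]
      push_cast
      ring
  refine ⟨expLp (hlam 0), (dense_expSpan_univ hlam hinj
    (not_summable_re_div_one_add_sq_powSum hr (inv_le_one_of_one_le₀ ha) hb)).mono ?_⟩
  refine Submodule.span_le.2 ?_
  rintro _ ⟨n, -, rfl⟩
  have hn : (a⁻¹ : ℂ) ^ n ≠ 0 := pow_ne_zero n (inv_ne_zero (ofReal_ne_zero.2 ha₀.ne'))
  exact (Submodule.smul_mem_iff _ hn).1 (horbit n ▸ Submodule.subset_span ⟨n, rfl⟩)

end Sufficiency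

section Necessity

/-- The transposition argument: since `D (T ^ n x) (T ^ m x)` depends only on `n + m`, the form is
symmetric on the orbit. -/
theorem IsCyclicVector.apply_comm {𝕜 E F : Type*} [NontriviallyNormedField 𝕜]
    [SeminormedAddCommGroup E] [NormedSpace 𝕜 E] [NormedAddCommGroup F] [NormedSpace 𝕜 F]
    {T : E →L[𝕜] E} {v : E} (hv : IsCyclicVector T v) {D : E →L[𝕜] E →L[𝕜] F}
    (hD : ∀ x y, D (T x) y = D x (T y)) (x y : E) : D x y = D y x := by
  have hpow (n : ℕ) (x y : E) : D ((T ^ n) x) y = D x ((T ^ n) y) := by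
    induction n generalizing x y with
    | zero => rfl
    | succ n ih =>
      rw [pow_succ, mul_apply_eq_comp, ih, hD, ← mul_apply_eq_comp, ← pow_succ, pow_succ']
  suffices h : D = D.flip from congr($h x y)
  refine ContinuousLinearMap.ext_on hv ?_
  rintro _ ⟨n, rfl⟩
  refine ContinuousLinearMap.ext_on hv ?_
  rintro _ ⟨m, rfl⟩
  rw [ContinuousLinearMap.flip_apply, hpow, hpow, ← mul_apply_eq_comp, ← mul_apply_eq_comp,
    ← pow_add, ← pow_add, add_comm, ← hpow]

theorem IsCyclicVector.integral_mul_weight_comm {α 𝕜 : Type*} [MeasurableSpace α] [RCLike 𝕜]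
    {μ : Measure α} {u : α → 𝕜} {ψ : α → α} {C : ℝ≥0} (hu : AEStronglyMeasurable u μ)
    (hψ : Measure.QuasiMeasurePreserving ψ μ μ)
    (hC : ∀ g : α → ℝ≥0∞, ∫⁻ x, ‖u x‖ₑ ^ 2 * g (ψ x) ∂μ ≤ C * ∫⁻ x, g x ∂μ)
    {T : Lp 𝕜 2 μ →L[𝕜] Lp 𝕜 2 μ} {v : Lp 𝕜 2 μ} (hv : IsCyclicVector T v)
    (hT : ∀ G H : Lp 𝕜 2 μ,
      ∫ x, T G x * (u x * H (ψ x)) ∂μ = ∫ x, G x * (u x * T H (ψ x)) ∂μ)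
    {G H : α → 𝕜} (hG : MemLp G 2 μ) (hH : MemLp H 2 μ) :
    ∫ x, G x * (u x * H (ψ x)) ∂μ = ∫ x, H x * (u x * G (ψ x)) ∂μ := by
  let D := ((ContinuousLinearMap.mul 𝕜 𝕜).lpPairing μ 2 2).bilinearComp (.id 𝕜 _)
    (weightedComp hu hψ hC)
  have hD (G H : Lp 𝕜 2 μ) : D G H = ∫ x, G x * (u x * H (ψ x)) ∂μ := by
    refine (ContinuousLinearMap.lpPairing_eq_integral _ _ _).trans (integral_congr_ae ?_)
    filter_upwards [coeFn_weightedComp hu hψ hC H] with x hx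
    exact congr(G x * $hx)
  have htoLp {G H : α → 𝕜} (hG : MemLp G 2 μ) (hH : MemLp H 2 μ) :
      D (hG.toLp G) (hH.toLp H) = ∫ x, G x * (u x * H (ψ x)) ∂μ := by
    rw [hD]
    refine integral_congr_ae ?_
    filter_upwards [hG.coeFn_toLp, hψ.ae hH.coeFn_toLp] with x hGx hHx
    rw [hGx, hHx]
  rw [← htoLp hG hH, ← htoLp hH hG]
  exact hv.apply_comm (fun G H ↦ by rw [hD, hD, hT]) _ _

theorem memLp_indicator_Ioo {f : ℝ → ℂ} (hf : Continuous f) (u v : ℝ) :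
    MemLp ((Ioo u v).indicator f) 2 halfLine := by
  obtain ⟨C, hC⟩ := isCompact_Icc.exists_bound_of_continuousOn (hf.continuousOn (s := Icc u v))
  refine .of_le (memLp_indicator_const 2 (measurableSet_Ioo (a := u) (b := v)) C
    (.inr (measure_Ioo_lt_top.ne)))
    (hf.aestronglyMeasurable.indicator measurableSet_Ioo) (.of_forall fun t ↦ ?_)
  by_cases ht : t ∈ Ioo u v
  · simpa [ht] using (hC t (Ioo_subset_Icc_self ht)).trans (le_abs_self C)
  · simp [ht]

theorem integral_halfLine_indicator_Ioo {E : Type*} [NormedAddCommGroup E] [NormedSpace ℝ E]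
    {u v : ℝ} (hu : 0 ≤ u) (huv : u ≤ v) (g : ℝ → E) :
    ∫ t, (Ioo u v).indicator g t ∂halfLine = ∫ t in u..v, g t := by
  rw [integral_indicator measurableSet_Ioo, halfLine, Measure.restrict_restrict measurableSet_Ioo,
    inter_eq_left.2 fun t ht ↦ mem_Ioi.2 (hu.trans_lt ht.1), intervalIntegral.integral_of_le huv,
    integral_Ioc_eq_integral_Ioo]

section Translation

variable {κ : ℝ}

theorem quasiMeasurePreserving_add_right_halfLine (hκ : 0 ≤ κ) :
    Measure.QuasiMeasurePreserving (· + κ) halfLine halfLine :=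
  (measurePreserving_add_right volume κ).quasiMeasurePreserving.restrict fun _ ht ↦
    add_pos_of_pos_of_nonneg ht hκ

theorem lintegral_halfLine_comp_add_right_le (hκ : 0 ≤ κ) (g : ℝ → ℝ≥0∞) :
    ∫⁻ t, g (t + κ) ∂halfLine ≤ ∫⁻ t, g t ∂halfLine := by
  simp only [halfLine, ← lintegral_indicator measurableSet_Ioi]
  rw [← lintegral_add_right_eq_self ((Ioi 0).indicator g) κ]
  refine lintegral_mono fun t ↦ indicator_le (s := Ioi 0)
    (g := fun t ↦ (Ioi 0).indicator g (t + κ)) (fun t (ht : 0 < t) ↦ ?_) t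
  rw [indicator_of_mem (mem_Ioi.2 (by positivity))]

theorem exists_pos_cexp_neg_mul_eq_one {b : ℂ} (hb : b.re = 0) :
    ∃ κ : ℝ, 0 < κ ∧ cexp (-b * κ) = 1 := by
  rw [show b = b.im * I from Complex.ext (by simp [hb]) (by simp)]
  rcases eq_or_ne b.im 0 with h | h
  · exact ⟨1, one_pos, by simp [h]⟩
  refine ⟨|2 * π / b.im|, by positivity, Complex.exp_eq_one_iff.2 ?_⟩
  have hb' : (b.im : ℂ) ≠ 0 := by exact_mod_cast h
  rcases abs_choice (2 * π / b.im) with h' | h' <;> rw [h']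
  · exact ⟨-1, by push_cast; field_simp⟩
  · exact ⟨1, by push_cast; field_simp⟩

theorem not_isCyclicVector_affineOp_one {b : ℂ} (hb : b.re = 0)
    (F : Lp ℂ 2 halfLine) : ¬ IsCyclicVector (affineOp one_pos hb.ge) F := by
  intro hF
  obtain ⟨κ, hκ, hexp⟩ := exists_pos_cexp_neg_mul_eq_one hb
  have hQMP := quasiMeasurePreserving_add_right_halfLine hκ.le
  have hcomm (G H : Lp ℂ 2 halfLine) :
      ∫ t, affineOp one_pos hb.ge G t * (1 * H (t + κ)) ∂halfLine =
        ∫ t, G t * (1 * affineOp one_pos hb.ge H (t + κ)) ∂halfLine := by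
    refine integral_congr_ae ?_
    filter_upwards [coeFn_affineOp one_pos hb.ge G, hQMP.ae (coeFn_affineOp one_pos hb.ge H)]
      with t hG hH
    have hper : cexp (-b * (t + κ : ℝ)) = cexp (-b * t) := by
      rw [ofReal_add, mul_add, Complex.exp_add, hexp, mul_one]
    rw [hG, hH]
    simp only [damp, inv_one, one_mul, ofReal_one, hper]
    ring
  have hsymm := hF.integral_mul_weight_comm (u := fun _ ↦ 1) (C := 1)
    aestronglyMeasurable_const hQMP
    (fun g ↦ by simpa using lintegral_halfLine_comp_add_right_le hκ.le g) hcomm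
    (memLp_indicator_Ioo continuous_one 0 κ) (memLp_indicator_Ioo continuous_one κ (2 * κ))
  have hleft (t : ℝ) : (Ioo 0 κ).indicator (1 : ℝ → ℂ) t *
      (1 * (Ioo κ (2 * κ)).indicator 1 (t + κ)) = (Ioo 0 κ).indicator 1 t := by
    have hmem : t + κ ∈ Ioo κ (2 * κ) ↔ t ∈ Ioo 0 κ := by
      simp only [mem_Ioo, lt_add_iff_pos_left, two_mul, add_lt_add_iff_right]
    by_cases ht : t ∈ Ioo 0 κ <;> simp [indicator, hmem, ht]
  have hright (t : ℝ) : (Ioo κ (2 * κ)).indicator (1 : ℝ → ℂ) t *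
      (1 * (Ioo 0 κ).indicator 1 (t + κ)) = 0 := by
    by_cases ht : t ∈ Ioo κ (2 * κ)
    · rw [indicator_of_notMem (s := Ioo 0 κ) fun h ↦ by linarith [ht.1, h.2], mul_zero, mul_zero]
    · rw [indicator_of_notMem ht, zero_mul]
  simp only [hleft, hright, integral_zero,
    integral_halfLine_indicator_Ioo le_rfl hκ.le (1 : ℝ → ℂ)] at hsymm
  simp [hκ.ne'] at hsymm

end Translation

section Inversion

theorem quasiMeasurePreserving_inv_halfLine :
    Measure.QuasiMeasurePreserving (·⁻¹) halfLine halfLine := by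
  refine ⟨measurable_inv, .mk fun s hs h0 ↦ ?_⟩
  rw [Measure.restrict_apply hs] at h0
  have himage : (·⁻¹) ⁻¹' s ∩ Ioi 0 = (·⁻¹) '' (s ∩ Ioi (0 : ℝ)) := by
    rw [image_inv_eq_inv, inter_inv, inv_preimage]
    congr 1 with t
    simp
  rw [Measure.map_apply measurable_inv hs, Measure.restrict_apply (measurable_inv hs), himage]
  exact addHaar_image_eq_zero_of_differentiableOn_of_addHaar_eq_zero volume
    (fun t ht ↦ (differentiableAt_inv (ne_of_gt ht.2)).differentiableWithinAt) h0

theorem lintegral_halfLine_comp_inv (g : ℝ → ℝ≥0∞) :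
    ∫⁻ t, ENNReal.ofReal (t ^ 2)⁻¹ * g t⁻¹ ∂halfLine = ∫⁻ t, g t ∂halfLine := by
  have himage : (fun t : ℝ ↦ t⁻¹) '' Ioi 0 = Ioi 0 := by
    ext t
    simp [image_inv_eq_inv]
  have h := lintegral_image_eq_lintegral_abs_deriv_mul measurableSet_Ioi
    (fun t (ht : 0 < t) ↦ (hasDerivAt_inv ht.ne').hasDerivWithinAt) inv_injective.injOn g
  rw [himage] at h
  simpa only [abs_neg, abs_inv, abs_sq, abs_pow, sq_abs] using h.symm

/-- The weight of the transposition `H ↦ (t ↦ W t · H t⁻¹)`, for `p` the fixed point of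
`w ↦ a w + b` and `κ log a` a multiple of `2π`. -/
noncomputable def inversionWeight (κ : ℝ) (p : ℂ) (t : ℝ) : ℂ :=
  Real.sin (κ * Real.log t) * cexp (-p * (t + t⁻¹)) * t⁻¹

variable {κ : ℝ} {p : ℂ}

theorem measurable_inversionWeight : Measurable (inversionWeight κ p) := by
  unfold inversionWeight
  fun_prop

theorem lintegral_inversionWeight_le (hp : 0 ≤ p.re) (g : ℝ → ℝ≥0∞) :
    ∫⁻ t, ‖inversionWeight κ p t‖ₑ ^ 2 * g t⁻¹ ∂halfLine ≤ (1 : ℝ≥0) * ∫⁻ t, g t ∂halfLine := by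
  rw [ENNReal.coe_one, one_mul, ← lintegral_halfLine_comp_inv g]
  refine setLIntegral_mono' measurableSet_Ioi fun t (ht : 0 < t) ↦ mul_le_mul_left ?_ _
  have hexp : ‖cexp (-p * (t + t⁻¹))‖ ≤ 1 := by
    rw [norm_exp, Real.exp_le_one_iff, ← ofReal_add, re_mul_ofReal, neg_re, neg_mul,
      neg_nonpos]
    positivity
  have hnorm : ‖inversionWeight κ p t‖ ≤ t⁻¹ := by
    rw [inversionWeight, norm_mul, norm_mul, norm_real t⁻¹,
      Real.norm_of_nonneg (inv_pos.2 ht).le]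
    refine mul_le_of_le_one_left (by positivity) (mul_le_one₀ ?_ (norm_nonneg _) hexp)
    exact (norm_real _).trans_le (Real.abs_sin_le_one _)
  rw [← ofReal_norm, ← ENNReal.ofReal_pow (norm_nonneg _), ← inv_pow]
  gcongr

theorem exists_sin_mul_log_mul_eq {a : ℝ} (ha : 0 < a) (ha₁ : a ≠ 1) :
    ∃ κ : ℝ, 0 < κ ∧
      ∀ t : ℝ, 0 < t → Real.sin (κ * Real.log (a * t)) = Real.sin (κ * Real.log t) := by
  have hl : Real.log a ≠ 0 := Real.log_ne_zero_of_pos_of_ne_one ha ha₁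
  refine ⟨|2 * π / Real.log a|, by positivity, fun t ht ↦ ?_⟩
  rw [Real.log_mul ha.ne' ht.ne', mul_add, add_comm]
  rcases abs_choice (2 * π / Real.log a) with h | h <;> rw [h]
  · rw [div_mul_cancel₀ _ hl, Real.sin_add_two_pi]
  · rw [neg_mul _ (Real.log a), div_mul_cancel₀ _ hl, ← sub_eq_add_neg, Real.sin_sub_two_pi]

theorem exp_mul_inversionWeight {a : ℝ} {b : ℂ} (ha : 0 < a) (hp : a * p + b = p)
    (hκ : ∀ t : ℝ, 0 < t → Real.sin (κ * Real.log (a * t)) = Real.sin (κ * Real.log t))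
    {t : ℝ} (ht : 0 < t) :
    cexp (-b * t) * inversionWeight κ p (a * t) =
      inversionWeight κ p t * (a⁻¹ * cexp (-b * (a⁻¹ * t⁻¹))) := by
  have hexp : cexp (-b * t) * cexp (-p * (a * t + (a * t)⁻¹)) =
      cexp (-p * (t + t⁻¹)) * cexp (-b * (a⁻¹ * t⁻¹)) := by
    rw [← Complex.exp_add, ← Complex.exp_add, eq_sub_of_add_eq' hp]
    congr 1
    push_cast
    have ha' : (a : ℂ) ≠ 0 := by exact_mod_cast ha.ne'
    have ht' : (t : ℂ) ≠ 0 := by exact_mod_cast ht.ne'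
    field_simp
    ring
  rw [inversionWeight, inversionWeight, hκ t ht]
  push_cast at hexp ⊢
  linear_combination Complex.sin (κ * Real.log t) * ((a : ℂ) * t)⁻¹ * hexp

theorem integral_affineOp_mul_inversionWeight {a : ℝ} {b : ℂ} (ha : 0 < a) (hb : 0 ≤ b.re)
    (hp : a * p + b = p)
    (hκ : ∀ t : ℝ, 0 < t → Real.sin (κ * Real.log (a * t)) = Real.sin (κ * Real.log t))
    (G H : Lp ℂ 2 halfLine) :
    ∫ t, affineOp ha hb G t * (inversionWeight κ p t * H t⁻¹) ∂halfLine =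
      ∫ t, G t * (inversionWeight κ p t * affineOp ha hb H t⁻¹) ∂halfLine := by
  have ha' : (a : ℂ) ≠ 0 := by exact_mod_cast ha.ne'
  let g (t : ℝ) : ℂ :=
    a⁻¹ * damp b G t * (inversionWeight κ p (a * t) * H (a⁻¹ * t⁻¹))
  calc _ = ∫ t, a⁻¹ * damp b G (a⁻¹ * t) * (inversionWeight κ p t * H t⁻¹) ∂halfLine :=
        integral_congr_ae <| (coeFn_affineOp ha hb G).mono fun t ht ↦ by simp only [ht]
    _ = ∫ t, g (a⁻¹ * t) ∂halfLine := integral_congr_ae <| .of_forall fun t ↦ by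
        simp only [g, mul_inv, mul_inv_cancel_left₀ ha.ne', inv_inv, inv_mul_cancel_left₀ ha.ne']
    _ = ∫ t, a * g t ∂halfLine := by
        rw [integral_comp_mul_left_Ioi g 0 (inv_pos.2 ha), mul_zero, inv_inv, real_smul,
          integral_const_mul]
    _ = ∫ t, G t * (inversionWeight κ p t * (a⁻¹ * damp b H (a⁻¹ * t⁻¹))) ∂halfLine :=
        setIntegral_congr_fun measurableSet_Ioi fun t ht ↦ by
          have hW := exp_mul_inversionWeight ha hp hκ ht
          simp only [g, damp]
          push_cast at hW ⊢
          rw [mul_assoc (a : ℂ)⁻¹, mul_inv_cancel_left₀ ha']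
          linear_combination G t * H (a⁻¹ * t⁻¹) * hW
    _ = _ := integral_congr_ae <| (quasiMeasurePreserving_inv_halfLine.ae
        (coeFn_affineOp ha hb H)).mono fun t ht ↦ by simp only [ht]

theorem integral_sin_mul_log_mul_inv (hκ : κ ≠ 0) {u v : ℝ} (hu : 0 < u) (huv : u ≤ v) :
    ∫ t in u..v, Real.sin (κ * Real.log t) * t⁻¹ =
      (Real.cos (κ * Real.log u) - Real.cos (κ * Real.log v)) / κ := by
  have hpos : ∀ t ∈ uIcc u v, t ≠ 0 := fun t ht ↦
    (hu.trans_le (uIcc_of_le huv ▸ ht).1).ne'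
  have hderiv : ∀ t ∈ uIcc u v, HasDerivAt (fun t ↦ -Real.cos (κ * Real.log t) / κ)
      (Real.sin (κ * Real.log t) * t⁻¹) t := fun t ht ↦ by
    refine (((Real.hasDerivAt_log (hpos t ht)).const_mul κ).cos.neg.div_const κ).congr_deriv ?_
    rw [neg_mul, neg_neg, mul_left_comm, mul_div_cancel_left₀ _ hκ]
  rw [intervalIntegral.integral_eq_sub_of_hasDerivAt hderiv]
  · ring
  · refine ContinuousOn.intervalIntegrable ?_
    fun_prop (disch := assumption)

theorem integral_indicator_mul_inversionWeight (hκ : κ ≠ 0) {u v : ℝ} (hu : 0 < u) (huv : u ≤ v) :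
    ∫ t, (Ioo u v).indicator (damp (-p) 1) t *
      (inversionWeight κ p t * (Ioo v⁻¹ u⁻¹).indicator (damp (-p) 1) t⁻¹) ∂halfLine =
      ((Real.cos (κ * Real.log u) - Real.cos (κ * Real.log v)) / κ : ℝ) := by
  have hind (t : ℝ) (ht : 0 < t) : (Ioo u v).indicator (damp (-p) 1) t *
      (inversionWeight κ p t * (Ioo v⁻¹ u⁻¹).indicator (damp (-p) 1) t⁻¹) =
        (Ioo u v).indicator (fun t ↦ ((Real.sin (κ * Real.log t) * t⁻¹ : ℝ) : ℂ)) t := by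
    have hmem : t⁻¹ ∈ Ioo v⁻¹ u⁻¹ ↔ t ∈ Ioo u v := by
      rw [mem_Ioo, mem_Ioo, inv_lt_inv₀ (hu.trans_le huv) ht, inv_lt_inv₀ ht hu, and_comm]
    have hexp : cexp (p * t) * cexp (-p * (t + t⁻¹)) * cexp (p * t⁻¹) = 1 := by
      rw [← Complex.exp_add, ← Complex.exp_add, ← Complex.exp_zero]
      ring_nf
    by_cases h : t ∈ Ioo u v
    · rw [indicator_of_mem h, indicator_of_mem h, indicator_of_mem (hmem.2 h)]
      simp only [damp, inversionWeight, Pi.one_apply, neg_neg]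
      push_cast at hexp ⊢
      linear_combination Complex.sin (κ * Real.log t) * (t : ℂ)⁻¹ * hexp
    · rw [indicator_of_notMem h, indicator_of_notMem h, zero_mul]
  rw [setIntegral_congr_fun measurableSet_Ioi hind, integral_halfLine_indicator_Ioo hu.le huv,
    intervalIntegral.integral_ofReal, integral_sin_mul_log_mul_inv hκ hu huv]

theorem not_isCyclicVector_affineOp_of_fixedPoint {a : ℝ} {b : ℂ} (ha : 0 < a) (ha₁ : a ≠ 1)
    (hb : 0 ≤ b.re) (hp : 0 ≤ p.re) (hfix : a * p + b = p) (F : Lp ℂ 2 halfLine) :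
    ¬ IsCyclicVector (affineOp ha hb) F := by
  intro hF
  obtain ⟨κ, hκ, hsin⟩ := exists_sin_mul_log_mul_eq ha ha₁
  set R := rexp (π / κ) with hR
  have hR₁ : 1 ≤ R := Real.one_le_exp (by positivity)
  have hlog : κ * Real.log R = π := by rw [hR, Real.log_exp, mul_div_cancel₀ _ hκ.ne']
  have htest (u v : ℝ) : MemLp ((Ioo u v).indicator (damp (-p) 1)) 2 halfLine :=
    memLp_indicator_Ioo (by unfold damp; fun_prop) u v
  have hsymm := hF.integral_mul_weight_comm measurable_inversionWeight.aestronglyMeasurable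
    quasiMeasurePreserving_inv_halfLine (lintegral_inversionWeight_le hp)
    (integral_affineOp_mul_inversionWeight ha hb hfix hsin) (htest 1 R) (htest R⁻¹ 1)
  have hleft := integral_indicator_mul_inversionWeight (p := p) hκ.ne' one_pos hR₁
  have hright := integral_indicator_mul_inversionWeight (p := p) hκ.ne'
    (inv_pos.2 (one_pos.trans_le hR₁)) (inv_le_one_of_one_le₀ hR₁)
  rw [inv_one] at hleft
  rw [inv_one, inv_inv] at hright
  rw [hleft, hright, ofReal_inj, Real.log_inv, Real.log_one, mul_neg, hlog, Real.cos_neg] at hsymm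
  simp only [mul_zero, Real.cos_zero, Real.cos_pi] at hsymm
  have : 0 < 2 / κ := by positivity
  ring_nf at hsymm this
  linarith

end Inversion

theorem IsCyclicVector.one_le_and_re_pos {a : ℝ} {b : ℂ} {ha : 0 < a} {hb : 0 ≤ b.re}
    {F : Lp ℂ 2 halfLine} (hF : IsCyclicVector (affineOp ha hb) F) : 1 ≤ a ∧ 0 < b.re := by
  by_contra! h
  rcases eq_or_ne a 1 with rfl | ha₁
  · exact not_isCyclicVector_affineOp_one ((h le_rfl).antisymm hb) F hF
  have hsub : (1 - a : ℂ) ≠ 0 := by exact_mod_cast sub_ne_zero.2 ha₁.symm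
  refine not_isCyclicVector_affineOp_of_fixedPoint (p := b / (1 - a : ℝ)) ha ha₁ hb ?_ ?_ F hF
  · rw [div_ofReal_re]
    rcases le_or_gt 1 a with h₁ | h₁
    · rw [(h h₁).antisymm hb, zero_div]
    · exact div_nonneg hb (sub_nonneg.2 h₁.le)
  · push_cast
    field_simp
    ring

end Necessity

/-- Characterization of cyclicity of affine composition operators on `H²(ℂ₊)`:
`C_φ` with `φ(w) = aw + b` is cyclic iff `a ≥ 1` and `Re b > 0`. -/
theorem cyclic_iff (a : ℝ) (ha : 0 < a) (b : ℂ) (hb : 0 ≤ b.re)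
    (φ : ℂ → ℂ) (hφ : ∀ w, φ w = (a : ℂ) * w + b) :
    (∃ f : ℂ → ℂ, MemH2 f ∧
        ∀ g : ℂ → ℂ, MemH2 g → ∀ ε : ℝ, 0 < ε →
          ∃ h ∈ Submodule.span ℂ (Set.range fun n : ℕ => f ∘ φ^[n]),
            H2normSq (g - h) < ENNReal.ofReal ε ^ 2) ↔
      1 ≤ a ∧ 0 < b.re := by
  rw [exists_cyclic_iff_exists_isCyclicVector ha hb hφ]
  exact ⟨fun ⟨_, hF⟩ ↦ hF.one_le_and_re_pos, fun ⟨ha₁, hb₀⟩ ↦ exists_isCyclicVector ha₁ hb₀⟩
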